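/- arXiv:2101.05835 — 6 statements merged into one kernel-verified Lean document; each statement's English description precedes it below -/
import Mathlib

section
/- Fix z > 0. For an integer n ≥ 1 set ν = n − 1/2 and define G_ν(z) = z·Y'_ν(z)/Y_ν(z) = 1/2 + z·y'_{n−1}(z)/y_{n−1}(z), where the derivative is with respect to z. There exist a constant C > 0 and an integer N such that for every integer n ≥ N: −ν + z²/(2ν) − (1/6)·z²/ν² − C/ν³ ≤ G_ν(z) ≤ −ν + z²/(2ν) + (7/6)·z²/ν² + C/ν³, and in particular G_ν(z) < 0. -/
/-- Spherical Bessel function of the first kind `j_n`, defined by the standard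
recurrence `j_{n+1}(z) = ((2n+1)/z) j_n(z) - j_{n-1}(z)`. -/
noncomputable def jsph : ℕ → ℝ → ℝ
  | 0, z => Real.sin z / z
  | 1, z => Real.sin z / z ^ 2 - Real.cos z / z
  | (n + 2), z => ((2 * (n : ℝ) + 3) / z) * jsph (n + 1) z - jsph n z

/-- Spherical Bessel function of the second kind `y_n`, defined by the standard
recurrence `y_{n+1}(z) = ((2n+1)/z) y_n(z) - y_{n-1}(z)`. -/
noncomputable def ysph : ℕ → ℝ → ℝ
  | 0, z => -Real.cos z / z
  | 1, z => -Real.cos z / z ^ 2 - Real.sin z / z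
  | (n + 2), z => ((2 * (n : ℝ) + 3) / z) * ysph (n + 1) z - ysph n z

/-- Spherical Hankel function of the first kind `h^{(1)}_n`. -/
noncomputable def h1sph (n : ℕ) (z : ℝ) : ℂ :=
  (jsph n z : ℂ) + Complex.I * (ysph n z : ℂ)

/-- Spherical Hankel function of the second kind `h^{(2)}_n`. -/
noncomputable def h2sph (n : ℕ) (z : ℝ) : ℂ :=
  (jsph n z : ℂ) - Complex.I * (ysph n z : ℂ)

/-!
With `ρ_n = z y_n / y_{n+1}` the recurrence reads `ρ_{n+1} = z² / (2n + 3 - ρ_n)`, and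
`G_ν = -ν + ρ_{n-2}` for `ν = n - 1/2`. Once some `|ρ_n| ≤ 1` with `n` large, the recurrence forces
`ρ_n = O(1/n)`, and substituting this back gives `ρ_{n-2} = z²/(2ν) + z²/(2ν²) + O(ν⁻³)`.

The only obstruction is that `y` might be the minimal solution, for which `|ρ_n| > 1` for all
large `n`; then `y_n = O(|z|^n)`. But `|j_n| ≤ |z|^n / (2n+1)‼`, so the products in the Wronskian
`j_{n+1} y_n - j_n y_{n+1} = z⁻²` would tend to zero.
-/

open Asymptotics Filter Set
open scoped Nat Topology

/-- The three-term recurrence in the order satisfied at the point `z` by all spherical Bessel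
functions; `u n` stands for the value of the function of order `n`. -/
def SphericalRecurrence (z : ℝ) (u : ℕ → ℝ) : Prop :=
  ∀ n : ℕ, u (n + 2) = (2 * n + 3) / z * u (n + 1) - u n

/-- The ratio `ρ_n = z u_n / u_{n+1}`, in terms of which the recurrence becomes a continued
fraction; it is `0` where `u_{n+1} = 0`. -/
noncomputable def successiveRatio (z : ℝ) (u : ℕ → ℝ) (n : ℕ) : ℝ :=
  z * u n / u (n + 1)

lemma frequently_abs_successiveRatio_le_one {z : ℝ} {u : ℕ → ℝ} (hz : z ≠ 0)
    (hu : ¬ u =O[atTop] (z ^ ·)) :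
    ∃ᶠ n in atTop, u (n + 1) ≠ 0 ∧ |successiveRatio z u n| ≤ 1 := by
  contrapose! hu
  obtain ⟨N, hN⟩ := eventually_atTop.1 hu
  have contraction (n : ℕ) (hn : N ≤ n) : |u (n + 1)| ≤ |z| * |u n| := by
    by_cases h0 : u (n + 1) = 0
    · rw [h0, abs_zero]
      positivity
    · have hratio := hN n hn h0
      rw [successiveRatio, abs_div, one_lt_div (abs_pos.2 h0), abs_mul] at hratio
      exact hratio.le
  refine .of_bound (|u N| / |z| ^ N) (eventually_atTop.2 ⟨N, fun n hn ↦ ?_⟩)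
  obtain ⟨k, rfl⟩ := Nat.exists_eq_add_of_le hn
  calc ‖u (N + k)‖ ≤ |z| ^ k * |u N| :=
        le_geom (u := fun k ↦ |u (N + k)|) (abs_nonneg z) k
          fun i _ ↦ contraction (N + i) (Nat.le_add_right N i)
    _ = |u N| / |z| ^ N * ‖z ^ (N + k)‖ := by
        rw [norm_pow, Real.norm_eq_abs, pow_add]
        field_simp

lemma abs_div_sub_expansion_le {a s ν : ℝ} (ha : 0 ≤ a) (hν : 3 ≤ ν) (hs : |s| ≤ 1)
    (hsν : (ν + 1) * |s| ≤ a) :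
    |a / (2 * ν - 2 - s) - (a / (2 * ν) + (1 / 2) * a / ν ^ 2)| ≤ a * (a + 2) / 2 / ν ^ 3 := by
  have hden : ν ≤ 2 * ν - 2 - s := by linarith [le_of_abs_le hs]
  have hν0 : 0 < ν := by linarith
  have hden0 : 0 < 2 * ν - 2 - s := hν0.trans_le hden
  have error_eq : a / (2 * ν - 2 - s) - (a / (2 * ν) + (1 / 2) * a / ν ^ 2) =
      a * ((ν + 1) * s + 2) / (2 * ν ^ 2 * (2 * ν - 2 - s)) := by
    have hden_ne : 2 * (ν - 1) - s ≠ 0 := by convert hden0.ne' using 1; ring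
    field_simp
    ring
  have hnum : |(ν + 1) * s + 2| ≤ a + 2 := by
    calc |(ν + 1) * s + 2| ≤ |(ν + 1) * s| + |2| := abs_add_le _ _
      _ = (ν + 1) * |s| + 2 := by rw [abs_mul, abs_of_pos (by linarith : 0 < ν + 1), abs_two]
      _ ≤ a + 2 := by gcongr
  rw [error_eq, abs_div, abs_mul, abs_of_nonneg ha,
    abs_of_pos (by positivity : 0 < 2 * ν ^ 2 * (2 * ν - 2 - s))]
  calc a * |(ν + 1) * s + 2| / (2 * ν ^ 2 * (2 * ν - 2 - s))
      ≤ a * (a + 2) / (2 * ν ^ 2 * ν) := by gcongr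
    _ = a * (a + 2) / 2 / ν ^ 3 := by
        field_simp

namespace SphericalRecurrence

lemma casoratian_eq {z : ℝ} {u v : ℕ → ℝ} (hu : SphericalRecurrence z u)
    (hv : SphericalRecurrence z v) (n : ℕ) :
    u (n + 1) * v n - u n * v (n + 1) = u 1 * v 0 - u 0 * v 1 := by
  induction n with
  | zero => rfl
  | succ n ih =>
    rw [hu n, hv n]
    linear_combination ih

section Ratio

variable {z : ℝ} {u : ℕ → ℝ} {n : ℕ}

lemma mul_add_two_eq (hu : SphericalRecurrence z u) (hz : z ≠ 0) (hn : u (n + 1) ≠ 0) :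
    z * u (n + 2) = (2 * n + 3 - successiveRatio z u n) * u (n + 1) := by
  rw [hu n, successiveRatio]
  field_simp

lemma successiveRatio_succ (hu : SphericalRecurrence z u) (hz : z ≠ 0) (hn : u (n + 1) ≠ 0) :
    successiveRatio z u (n + 1) = z ^ 2 / (2 * n + 3 - successiveRatio z u n) := by
  calc successiveRatio z u (n + 1) = z ^ 2 * u (n + 1) / (z * u (n + 2)) := by
        rw [successiveRatio, sq, mul_assoc, mul_div_mul_left _ _ hz]
    _ = z ^ 2 / (2 * n + 3 - successiveRatio z u n) := by
        rw [hu.mul_add_two_eq hz hn, mul_div_mul_right _ _ hn]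

lemma abs_successiveRatio_succ_le (hu : SphericalRecurrence z u) (hz : z ≠ 0)
    (hn : u (n + 1) ≠ 0) (hρ : |successiveRatio z u n| ≤ 1) :
    |successiveRatio z u (n + 1)| ≤ z ^ 2 / (2 * n + 2) := by
  have hden : (2 * n + 2 : ℝ) ≤ 2 * n + 3 - successiveRatio z u n := by
    linarith [le_of_abs_le hρ]
  have hden0 : 0 ≤ 2 * n + 3 - successiveRatio z u n := le_trans (by positivity) hden
  rw [hu.successiveRatio_succ hz hn, abs_of_nonneg (by positivity)]
  gcongr

lemma abs_successiveRatio_succ_le_one (hu : SphericalRecurrence z u) (hz : z ≠ 0)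
    (hzn : z ^ 2 ≤ 2 * n + 2) (h : u (n + 1) ≠ 0 ∧ |successiveRatio z u n| ≤ 1) :
    u (n + 2) ≠ 0 ∧ |successiveRatio z u (n + 1)| ≤ 1 := by
  obtain ⟨hn, hρ⟩ := h
  have hden0 : 0 < 2 * n + 3 - successiveRatio z u n := by
    linarith [le_of_abs_le hρ, n.cast_nonneg (α := ℝ)]
  refine ⟨right_ne_zero_of_mul (a := z) ?_, ?_⟩
  · rw [hu.mul_add_two_eq hz hn]
    exact mul_ne_zero hden0.ne' hn
  · exact (hu.abs_successiveRatio_succ_le hz hn hρ).trans (div_le_one_of_le₀ hzn (by positivity))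

lemma eventually_abs_successiveRatio_le_one (hu : SphericalRecurrence z u) (hz : z ≠ 0)
    (hgrowth : ¬ u =O[atTop] (z ^ ·)) :
    ∀ᶠ n in atTop, u (n + 1) ≠ 0 ∧ |successiveRatio z u n| ≤ 1 := by
  obtain ⟨N, hN, hzN⟩ := ((frequently_abs_successiveRatio_le_one hz hgrowth).and_eventually
    (eventually_ge_atTop ⌈z ^ 2⌉₊)).exists
  refine eventually_atTop.2 ⟨N, fun n hn ↦ ?_⟩
  induction n, hn using Nat.le_induction with
  | base => exact hN
  | succ n hn ih =>
    refine hu.abs_successiveRatio_succ_le_one hz ?_ ih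
    have hzn : z ^ 2 ≤ n := Nat.ceil_le.1 (hzN.trans hn)
    linarith

lemma eventually_abs_successiveRatio_sub_expansion_le (hu : SphericalRecurrence z u) (hz : z ≠ 0)
    (hgrowth : ¬ u =O[atTop] (z ^ ·)) :
    ∀ᶠ n : ℕ in atTop, |successiveRatio z u n -
        (z ^ 2 / (2 * (n + 3 / 2)) + (1 / 2) * z ^ 2 / (n + 3 / 2) ^ 2)| ≤
      z ^ 2 * (z ^ 2 + 2) / 2 / (n + 3 / 2) ^ 3 := by
  obtain ⟨N, hN⟩ := eventually_atTop.1 (hu.eventually_abs_successiveRatio_le_one hz hgrowth)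
  refine eventually_atTop.2 ⟨N + 5, fun n hn ↦ ?_⟩
  obtain ⟨m, rfl⟩ := Nat.exists_eq_add_of_le' (show 2 ≤ n by lia)
  have hm : (3 : ℝ) ≤ m := by exact_mod_cast (by lia : 3 ≤ m)
  obtain ⟨hum, hρm⟩ := hN m (by lia)
  obtain ⟨hum', hρm'⟩ := hN (m + 1) (by lia)
  have hρ_small : (m + 9 / 2) * |successiveRatio z u (m + 1)| ≤ z ^ 2 := by
    have hρ_le := hu.abs_successiveRatio_succ_le hz hum hρm
    calc (m + 9 / 2) * |successiveRatio z u (m + 1)|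
        ≤ (2 * m + 2) * |successiveRatio z u (m + 1)| :=
          mul_le_mul_of_nonneg_right (by linarith) (abs_nonneg _)
      _ ≤ z ^ 2 := (le_div_iff₀' (by positivity)).1 hρ_le
  rw [hu.successiveRatio_succ hz hum',
    show ((m + 2 : ℕ) : ℝ) + 3 / 2 = m + 7 / 2 by push_cast; ring,
    show 2 * ((m + 1 : ℕ) : ℝ) + 3 = 2 * (m + 7 / 2) - 2 by push_cast; ring]
  refine abs_div_sub_expansion_le (sq_nonneg z) (by linarith) hρm' ?_
  rwa [show (m : ℝ) + 7 / 2 + 1 = m + 9 / 2 by ring]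

end Ratio

section Derivative

variable {f : ℕ → ℝ → ℝ}

lemma pow_mul_add_two_eq {u : ℕ → ℝ} {x : ℝ} (hu : SphericalRecurrence x u) (n : ℕ) :
    x ^ (n + 3) * u (n + 2) =
      (2 * n + 3) * (x ^ (n + 2) * u (n + 1)) - x ^ 2 * (x ^ (n + 1) * u n) := by
  rw [hu n]
  obtain rfl | hx := eq_or_ne x 0
  · simp
  · field_simp
    ring

-- Multiplying by `x ^ (n + 1)` clears the denominators, so that `x = 0` is not excluded.
lemma hasDerivAt_pow_mul (hf : ∀ x, SphericalRecurrence x (f · x)) {x d : ℝ}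
    (h0 : HasDerivAt (fun t ↦ t ^ 1 * f 0 t) d x)
    (h1 : HasDerivAt (fun t ↦ t ^ 2 * f 1 t) (x ^ 2 * f 0 x) x)
    (hd : x ^ 2 * f 1 x = x * f 0 x - x * d) (n : ℕ) :
    HasDerivAt (fun t ↦ t ^ (n + 2) * f (n + 1) t) (x ^ (n + 2) * f n x) x := by
  have hasDerivAt_add_two (n : ℕ) {a b : ℝ} (ha : HasDerivAt (fun t ↦ t ^ (n + 1) * f n t) a x)
      (hb : HasDerivAt (fun t ↦ t ^ (n + 2) * f (n + 1) t) b x) :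
      HasDerivAt (fun t ↦ t ^ (n + 3) * f (n + 2) t)
        ((2 * n + 3) * b - (2 * x * (x ^ (n + 1) * f n x) + x ^ 2 * a)) x := by
    simp only [(hf _).pow_mul_add_two_eq]
    simpa using (hb.const_mul (2 * n + 3 : ℝ)).fun_sub ((hasDerivAt_pow 2 x).fun_mul ha)
  induction n using Nat.twoStepInduction with
  | zero => exact h1
  | one =>
    convert hasDerivAt_add_two 0 h0 h1 using 1
    push_cast
    linear_combination x * hd
  | more n ih₀ ih₁ =>
    convert hasDerivAt_add_two (n + 1) ih₀ ih₁ using 1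
    push_cast
    linear_combination x * (hf x).pow_mul_add_two_eq n

lemma hasDerivAt_succ (hf : ∀ x, SphericalRecurrence x (f · x)) {x d : ℝ} (hx : x ≠ 0)
    (h0 : HasDerivAt (fun t ↦ t ^ 1 * f 0 t) d x)
    (h1 : HasDerivAt (fun t ↦ t ^ 2 * f 1 t) (x ^ 2 * f 0 x) x)
    (hd : x ^ 2 * f 1 x = x * f 0 x - x * d) (n : ℕ) :
    HasDerivAt (f (n + 1)) (f n x - (n + 2) / x * f (n + 1) x) x := by
  have hx' : x ^ (n + 2) ≠ 0 := pow_ne_zero _ hx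
  have hcancel : (fun t ↦ t ^ (n + 2) * f (n + 1) t / t ^ (n + 2)) =ᶠ[𝓝 x] f (n + 1) := by
    filter_upwards [eventually_ne_nhds hx] with t ht
    exact mul_div_cancel_left₀ _ (pow_ne_zero _ ht)
  refine (((hasDerivAt_pow_mul hf h0 h1 hd n).fun_div (hasDerivAt_pow (n + 2) x)
    hx').congr_of_eventuallyEq hcancel.symm).congr_deriv ?_
  rw [show n + 2 - 1 = n + 1 by rfl]
  push_cast
  field_simp
  ring

end Derivative

end SphericalRecurrence

section SphericalBessel

lemma sphericalRecurrence_jsph (z : ℝ) : SphericalRecurrence z (jsph · z) :=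
  fun n ↦ jsph.eq_3 z n

lemma sphericalRecurrence_ysph (z : ℝ) : SphericalRecurrence z (ysph · z) :=
  fun n ↦ ysph.eq_3 z n

lemma jsph_mul_ysph_sub {z : ℝ} (hz : z ≠ 0) (n : ℕ) :
    jsph (n + 1) z * ysph n z - jsph n z * ysph (n + 1) z = 1 / z ^ 2 := by
  rw [(sphericalRecurrence_jsph z).casoratian_eq (sphericalRecurrence_ysph z) n]
  simp only [jsph, ysph]
  field_simp
  linear_combination z * Real.sin_sq_add_cos_sq z

lemma jsph_neg (n : ℕ) (x : ℝ) : jsph n (-x) = (-1) ^ n * jsph n x := by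
  induction n using Nat.twoStepInduction with
  | zero => simp [jsph]
  | one =>
    simp only [jsph, Real.sin_neg, Real.cos_neg]
    ring
  | more n ih₀ ih₁ =>
    rw [jsph, jsph, ih₀, ih₁]
    ring

lemma pow_one_mul_jsph_zero (x : ℝ) : x ^ 1 * jsph 0 x = Real.sin x := by
  obtain rfl | hx := eq_or_ne x 0
  · simp
  · rw [jsph]
    field_simp

lemma sq_mul_jsph_one (x : ℝ) : x ^ 2 * jsph 1 x = Real.sin x - x * Real.cos x := by
  obtain rfl | hx := eq_or_ne x 0
  · simp
  · rw [jsph]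
    field_simp

lemma hasDerivAt_pow_mul_jsph (n : ℕ) (x : ℝ) :
    HasDerivAt (fun t ↦ t ^ (n + 2) * jsph (n + 1) t) (x ^ (n + 2) * jsph n x) x := by
  refine SphericalRecurrence.hasDerivAt_pow_mul sphericalRecurrence_jsph (d := Real.cos x)
    ?_ ?_ ?_ n
  · simpa only [pow_one_mul_jsph_zero] using Real.hasDerivAt_sin x
  · simp only [sq_mul_jsph_one]
    refine ((Real.hasDerivAt_sin x).fun_sub
      ((hasDerivAt_id x).fun_mul (Real.hasDerivAt_cos x))).congr_deriv ?_
    simp only [id]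
    linear_combination -x * pow_one_mul_jsph_zero x
  · linear_combination sq_mul_jsph_one x - pow_one_mul_jsph_zero x

lemma abs_pow_mul_jsph_le (n : ℕ) {x : ℝ} (hx : 0 ≤ x) :
    |x ^ (n + 1) * jsph n x| ≤ x ^ (2 * n + 1) / (2 * n + 1)‼ := by
  induction n generalizing x with
  | zero =>
    simpa [← pow_one_mul_jsph_zero, abs_of_nonneg hx] using Real.abs_sin_le_abs (x := x)
  | succ n ih =>
    have bound_deriv (t : ℝ) : HasDerivAt (fun t : ℝ ↦ t ^ (2 * n + 3) / (2 * n + 3)‼)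
        (t ^ (2 * n + 2) / (2 * n + 1)‼) t := by
      refine ((hasDerivAt_pow (2 * n + 3) t).div_const _).congr_deriv ?_
      rw [Nat.doubleFactorial_add_two, show 2 * n + 3 - 1 = 2 * n + 2 by rfl]
      push_cast
      field_simp
      ring
    refine image_norm_le_of_norm_deriv_right_le_deriv_boundary
      (fun t _ ↦ (hasDerivAt_pow_mul_jsph n t).continuousAt.continuousWithinAt)
      (fun t _ ↦ (hasDerivAt_pow_mul_jsph n t).hasDerivWithinAt) (by simp) bound_deriv
      (fun t ht ↦ ?_) (right_mem_Icc.2 hx)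
    calc ‖t ^ (n + 2) * jsph n t‖ = t * |t ^ (n + 1) * jsph n t| := by
          rw [Real.norm_eq_abs, pow_succ', mul_assoc, abs_mul, abs_of_nonneg ht.1]
      _ ≤ t * (t ^ (2 * n + 1) / (2 * n + 1)‼) := mul_le_mul_of_nonneg_left (ih ht.1) ht.1
      _ = t ^ (2 * n + 2) / (2 * n + 1)‼ := by ring

lemma abs_jsph_le (n : ℕ) {x : ℝ} (hx : x ≠ 0) : |jsph n x| ≤ |x| ^ n / (2 * n + 1)‼ := by
  wlog hpos : 0 < x generalizing x
  · simpa [jsph_neg, abs_mul] using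
      this (neg_ne_zero.2 hx) (neg_pos.2 (hx.lt_of_le (not_lt.1 hpos)))
  have h := abs_pow_mul_jsph_le n hpos.le
  rw [abs_mul, abs_of_pos (pow_pos hpos _)] at h
  rw [abs_of_pos hpos]
  refine le_of_mul_le_mul_left (h.trans_eq ?_) (pow_pos hpos (n + 1))
  ring

lemma factorial_le_doubleFactorial_two_mul_add_one (n : ℕ) : n ! ≤ (2 * n + 1)‼ := by
  induction n with
  | zero => rfl
  | succ n ih =>
    exact Nat.mul_le_mul (by lia) ih

lemma jsph_isLittleO_pow {z r : ℝ} (hz : z ≠ 0) (hr : r ≠ 0) :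
    (jsph · z) =o[atTop] (r ^ ·) := by
  have hfac : (jsph · z) =O[atTop] fun n : ℕ ↦ z ^ n / n ! := by
    refine isBigO_of_le _ fun n ↦ (abs_jsph_le n hz).trans ?_
    rw [norm_div, norm_pow, Real.norm_eq_abs, Real.norm_natCast]
    gcongr
    exact factorial_le_doubleFactorial_two_mul_add_one n
  refine hfac.trans_isLittleO ((isLittleO_iff_tendsto' (.of_forall fun n h ↦ ?_)).2 ?_)
  · exact absurd h (pow_ne_zero n hr)
  · refine (FloorSemiring.tendsto_pow_div_factorial_atTop (z / r)).congr fun n ↦ ?_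
    rw [div_pow, div_right_comm]

lemma not_ysph_isBigO_pow {z r : ℝ} (hz : z ≠ 0) (hr : r ≠ 0) :
    ¬ (ysph · z) =O[atTop] (r ^ ·) := by
  intro hy
  have hj : (jsph · z) =o[atTop] (r⁻¹ ^ ·) := jsph_isLittleO_pow hz (inv_ne_zero hr)
  have hsucc : Tendsto (fun n : ℕ ↦ n + 1) atTop atTop := tendsto_add_atTop_nat 1
  have h₁ : Tendsto (fun n ↦ jsph (n + 1) z * ysph n z) atTop (𝓝 0) := by
    refine (isLittleO_const_iff (inv_ne_zero hr)).1
      (((hj.comp_tendsto hsucc).mul_isBigO hy).congr_right fun n ↦ ?_)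
    rw [Function.comp_apply, pow_succ', mul_assoc, ← mul_pow, inv_mul_cancel₀ hr, one_pow, mul_one]
  have h₂ : Tendsto (fun n ↦ jsph n z * ysph (n + 1) z) atTop (𝓝 0) := by
    refine (isLittleO_const_iff hr).1
      ((hj.mul_isBigO (hy.comp_tendsto hsucc)).congr_right fun n ↦ ?_)
    rw [Function.comp_apply, pow_succ, ← mul_assoc, ← mul_pow, inv_mul_cancel₀ hr, one_pow, one_mul]
  have hwronskian : Tendsto (fun _ : ℕ ↦ 1 / z ^ 2) atTop (𝓝 (0 - 0)) :=
    (h₁.sub h₂).congr (jsph_mul_ysph_sub hz)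
  rw [sub_zero, tendsto_const_nhds_iff] at hwronskian
  exact one_div_ne_zero (pow_ne_zero 2 hz) hwronskian

lemma hasDerivAt_ysph_succ (n : ℕ) {z : ℝ} (hz : z ≠ 0) :
    HasDerivAt (ysph (n + 1)) (ysph n z - (n + 2) / z * ysph (n + 1) z) z := by
  have h0 : HasDerivAt (fun t ↦ t ^ 1 * ysph 0 t) (Real.sin z) z := by
    have hcos : HasDerivAt (fun t ↦ -Real.cos t) (Real.sin z) z := by
      simpa using (Real.hasDerivAt_cos z).fun_neg
    refine hcos.congr_of_eventuallyEq ?_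
    filter_upwards [eventually_ne_nhds hz] with t ht
    rw [ysph]
    field_simp
  have h1 : HasDerivAt (fun t ↦ t ^ 2 * ysph 1 t) (z ^ 2 * ysph 0 z) z := by
    have htrig : HasDerivAt (fun t ↦ -Real.cos t - t * Real.sin t) (-z * Real.cos z) z := by
      simpa using (Real.hasDerivAt_cos z).fun_neg.fun_sub
        ((hasDerivAt_id z).fun_mul (Real.hasDerivAt_sin z))
    refine (htrig.congr_of_eventuallyEq ?_).congr_deriv ?_
    · filter_upwards [eventually_ne_nhds hz] with t ht
      rw [ysph]
      field_simp
    · rw [ysph]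
      field_simp
  refine SphericalRecurrence.hasDerivAt_succ sphericalRecurrence_ysph hz h0 h1 ?_ n
  simp only [ysph]
  field_simp

end SphericalBessel

/-- `G_ν(z) = z Y'_ν(z) / Y_ν(z)` for the Bessel function `Y_ν` of half-integer order
`ν = n + 1/2`, written in terms of `ysph n`, so that `n` is the spherical order. -/
noncomputable def besselYLogDeriv (n : ℕ) (z : ℝ) : ℝ :=
  1 / 2 + z * deriv (ysph n) z / ysph n z

lemma besselYLogDeriv_succ {n : ℕ} {z : ℝ} (hz : z ≠ 0) (hy : ysph (n + 1) z ≠ 0) :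
    besselYLogDeriv (n + 1) z = -(n + 3 / 2) + successiveRatio z (ysph · z) n := by
  rw [besselYLogDeriv, (hasDerivAt_ysph_succ n hz).deriv, successiveRatio]
  field_simp
  ring

theorem logderiv_bessel_Y_asymptotic_general {z : ℝ} (hz : z ≠ 0) :
    ∀ᶠ n : ℕ in atTop, ysph (n - 1) z ≠ 0 ∧ besselYLogDeriv (n - 1) z < 0 ∧
      |besselYLogDeriv (n - 1) z - (-((n : ℝ) - 1 / 2) + z ^ 2 / (2 * ((n : ℝ) - 1 / 2))
          + (1 / 2) * z ^ 2 / ((n : ℝ) - 1 / 2) ^ 2)| ≤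
        z ^ 2 * (z ^ 2 + 2) / 2 / ((n : ℝ) - 1 / 2) ^ 3 := by
  have hrec := sphericalRecurrence_ysph z
  have hgrowth := not_ysph_isBigO_pow hz hz
  have hshift := tendsto_sub_atTop_nat 2
  filter_upwards [hshift.eventually (hrec.eventually_abs_successiveRatio_le_one hz hgrowth),
    hshift.eventually (hrec.eventually_abs_successiveRatio_sub_expansion_le hz hgrowth),
    eventually_ge_atTop 2] with n hbounded hexpansion hn
  obtain ⟨n, rfl⟩ := Nat.exists_eq_add_of_le' hn
  rw [Nat.add_sub_cancel] at hbounded hexpansion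
  obtain ⟨hy, hρ⟩ := hbounded
  rw [show n + 2 - 1 = n + 1 by rfl, besselYLogDeriv_succ hz hy,
    show ((n + 2 : ℕ) : ℝ) - 1 / 2 = n + 3 / 2 by push_cast; ring]
  refine ⟨hy, ?_, ?_⟩
  · linarith [le_of_abs_le hρ, n.cast_nonneg (α := ℝ)]
  · convert hexpansion using 2
    ring

/-- For fixed `z > 0`, asymptotic bound on `G_ν(z) = z Y'_ν(z)/Y_ν(z)
= 1/2 + z y'_{n-1}(z)/y_{n-1}(z)` with `ν = n - 1/2`; in particular `G_ν(z) < 0`. -/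
theorem logderiv_bessel_Y_asymptotic (z : ℝ) (hz : 0 < z) :
    ∃ C : ℝ, 0 < C ∧ ∃ N : ℕ, 1 ≤ N ∧ ∀ n : ℕ, N ≤ n →
      (-((n : ℝ) - 1/2) + z ^ 2 / (2 * ((n : ℝ) - 1/2))
          - (1/6) * z ^ 2 / ((n : ℝ) - 1/2) ^ 2 - C / ((n : ℝ) - 1/2) ^ 3
        ≤ 1/2 + z * deriv (ysph (n - 1)) z / ysph (n - 1) z) ∧
      (1/2 + z * deriv (ysph (n - 1)) z / ysph (n - 1) z
        ≤ -((n : ℝ) - 1/2) + z ^ 2 / (2 * ((n : ℝ) - 1/2))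
          + (7/6) * z ^ 2 / ((n : ℝ) - 1/2) ^ 2 + C / ((n : ℝ) - 1/2) ^ 3) ∧
      (1/2 + z * deriv (ysph (n - 1)) z / ysph (n - 1) z < 0) := by
  obtain ⟨N, hN⟩ := eventually_atTop.1 (logderiv_bessel_Y_asymptotic_general hz.ne')
  refine ⟨z ^ 2 * (z ^ 2 + 2) / 2, by positivity, N + 1, by lia, fun n hn ↦ ?_⟩
  obtain ⟨-, hneg, hexpansion⟩ := hN n (by lia)
  rw [besselYLogDeriv] at hneg hexpansion
  generalize (n : ℝ) - 1 / 2 = ν at *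
  obtain ⟨hlower, hupper⟩ := abs_le.1 hexpansion
  have hsq : 0 ≤ z ^ 2 / ν ^ 2 := by positivity
  rw [mul_div_assoc _ _ (ν ^ 2)] at hlower hupper
  rw [mul_div_assoc _ _ (ν ^ 2), mul_div_assoc _ _ (ν ^ 2)]
  exact ⟨by linarith, by linarith, hneg⟩
end

section
/- Fix κ_p, κ_s, R > 0. For n ∈ ℕ define z_n^{(1)}(t) = t·(h^{(1)}_n)'(t)/h^{(1)}_n(t) for t > 0 and Λ_n(R) = z_n^{(1)}(κ_p R)·(1 + z_n^{(1)}(κ_s R)) − n(n+1). Then there exist a constant C > 0 and an integer N such that for all n ≥ N, |Λ_n(R) + (κ_p² + κ_s²)·R²/2| ≤ C/n. -/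
/-- `z_n^{(1)}(t) = t (h^{(1)}_n)'(t) / h^{(1)}_n(t)`. -/
noncomputable def zn1 (n : ℕ) (t : ℝ) : ℂ := (t : ℂ) * deriv (h1sph n) t / h1sph n t

/-!
The Hankel functions satisfy `t h_{n+2} = (2n+3) h_{n+1} - t h_n`. Their Wronskian keeps
`|h_n h_{n+1}| ≥ 1 / t²`, so `h_n` is not the solution decaying in `n`, and hence `|h_n|` is
eventually nondecreasing. Consequently `w_n = z_n + n + 1`, which equals `t h_{n-1} / h_n` for
`n ≥ 1`, is bounded. The Riccati recurrence `w_{n+1} (2n + 1 - w_n) = t²` then improves boundedness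
to `w_n = O(1/n)`, and a second application gives `n w_n = t² / 2 + O(1/n)`. Expanding `Λ_n` in the
quantities `w_n` at `κ_p R` and `κ_s R` cancels the terms of order `n²` and `n`.
-/

open Filter Topology Asymptotics

section ThreeTermRecurrence

variable {𝕜 E : Type*} [NormedField 𝕜] [SeminormedAddCommGroup E] [NormedSpace 𝕜 E]

theorem norm_le_norm_of_smul_eq_add {a : 𝕜} {x y z : E} (ha : 2 ≤ ‖a‖) (hrec : a • y = z + x)
    (hxy : ‖x‖ ≤ ‖y‖) : ‖y‖ ≤ ‖z‖ := by
  have htriangle : ‖a‖ * ‖y‖ ≤ ‖z‖ + ‖x‖ := by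
    rw [← norm_smul, hrec]
    exact norm_add_le z x
  have hdouble : 2 * ‖y‖ ≤ ‖a‖ * ‖y‖ := by gcongr
  linarith

variable {a : ℕ → 𝕜} {u : ℕ → E}

theorem tendsto_zero_of_recurrence_of_isBigO_one (ha : Tendsto (fun n ↦ ‖a n‖) atTop atTop)
    (hrec : ∀ n, a n • u (n + 1) = u (n + 2) + u n) (hu : u =O[atTop] fun _ ↦ (1 : ℝ)) :
    Tendsto u atTop (𝓝 0) := by
  have hsum : (fun n ↦ u (n + 2) + u n) =O[atTop] fun _ ↦ (1 : ℝ) :=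
    (hu.comp_tendsto (tendsto_add_atTop_nat 2)).add hu
  have ha_inv : Tendsto (fun n ↦ (a n)⁻¹) atTop (𝓝 0) :=
    tendsto_inv₀_cobounded.comp (tendsto_norm_atTop_iff_cobounded.mp ha)
  have hsmul : Tendsto (fun n ↦ (a n)⁻¹ • (u (n + 2) + u n)) atTop (𝓝 0) :=
    NormedField.tendsto_zero_smul_of_tendsto_zero_of_bounded ha_inv
      ((isBigO_one_iff ℝ).mp hsum)
  rw [← tendsto_add_atTop_iff_nat 1]
  refine hsmul.congr' ?_
  filter_upwards [ha.eventually_gt_atTop 0] with n hn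
  rw [← hrec, inv_smul_smul₀ (norm_ne_zero_iff.mp hn.ne')]

theorem eventually_norm_le_norm_succ_of_recurrence (ha : Tendsto (fun n ↦ ‖a n‖) atTop atTop)
    (hrec : ∀ n, a n • u (n + 1) = u (n + 2) + u n) (hu : ¬Tendsto u atTop (𝓝 0)) :
    ∀ᶠ n in atTop, ‖u n‖ ≤ ‖u (n + 1)‖ := by
  obtain ⟨M, hM⟩ := eventually_atTop.mp (ha.eventually_ge_atTop 2)
  obtain ⟨N, hMN, hN⟩ : ∃ N ≥ M, ‖u N‖ ≤ ‖u (N + 1)‖ := by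
    by_contra! hdecr
    have hbound : ∀ n ≥ M, ‖u n‖ ≤ ‖u M‖ := fun n hn ↦ by
      induction n, hn using Nat.le_induction with
      | base => exact le_rfl
      | succ n hn ih => exact (hdecr n hn).le.trans ih
    refine hu (tendsto_zero_of_recurrence_of_isBigO_one ha hrec (.of_bound ‖u M‖ ?_))
    filter_upwards [eventually_ge_atTop M] with n hn
    simpa using hbound n hn
  filter_upwards [eventually_ge_atTop N] with n hn
  induction n, hn using Nat.le_induction with
  | base => exact hN
  | succ n hn ih => exact norm_le_norm_of_smul_eq_add (hM n (hMN.trans hn)) (hrec n) ih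

end ThreeTermRecurrence

section RiccatiRecurrence

variable {𝕜 : Type*} [RCLike 𝕜] {w : ℕ → 𝕜} {a : 𝕜}

theorem natCast_mul_sub_isBigO_of_riccati (hric : ∀ n : ℕ, w (n + 1) * (2 * n + 1 - w n) = a)
    (hw : w =O[atTop] fun _ ↦ (1 : ℝ)) {g : ℕ → ℝ} (hwg : w =O[atTop] g) :
    (fun n : ℕ ↦ n * w n - a / 2) =O[atTop] g := by
  rw [← map_add_atTop_eq_nat 1, isBigO_map] at hwg ⊢
  have hfactor : (fun n ↦ 1 + w n) =O[atTop] fun _ ↦ (1 : ℝ) :=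
    (isBigO_const_const 1 one_ne_zero atTop).add hw
  refine ((hwg.mul hfactor).const_mul_left (2⁻¹ : 𝕜)).congr (fun n ↦ ?_) fun n ↦ mul_one _
  simp only [Function.comp_apply, Nat.cast_add, Nat.cast_one]
  linear_combination -hric n / 2

theorem isBigO_inv_natCast_of_riccati (hric : ∀ n : ℕ, w (n + 1) * (2 * n + 1 - w n) = a)
    (hw : w =O[atTop] fun _ ↦ (1 : ℝ)) : w =O[atTop] fun n : ℕ ↦ (n : ℝ)⁻¹ := by
  have hnw : (fun n : ℕ ↦ (n : 𝕜) * w n) =O[atTop] fun _ ↦ (1 : ℝ) := by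
    simpa using (natCast_mul_sub_isBigO_of_riccati hric hw hw).add
      (isBigO_const_const (a / 2) (one_ne_zero (α := ℝ)) atTop)
  have hinv : (fun n : ℕ ↦ (n : 𝕜)⁻¹) =O[atTop] fun n : ℕ ↦ (n : ℝ)⁻¹ :=
    .of_norm_le fun n ↦ by simp
  refine (hinv.mul hnw).congr' ?_ (.of_forall fun n ↦ mul_one _)
  filter_upwards [eventually_ne_atTop 0] with n hn
  rw [inv_mul_cancel_left₀ (Nat.cast_ne_zero.mpr hn)]

end RiccatiRecurrence

theorem h1sph_add_two (n : ℕ) (t : ℝ) :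
    h1sph (n + 2) t = (2 * n + 3) / t * h1sph (n + 1) t - h1sph n t := by
  simp only [h1sph, jsph, ysph]
  push_cast
  ring

theorem h1sph_zero (t : ℝ) : h1sph 0 t = -Complex.I * Complex.exp (t * Complex.I) / t := by
  simp only [h1sph, jsph, ysph, Complex.exp_mul_I]
  push_cast
  linear_combination (Complex.sin t / t) * Complex.I_sq

theorem h1sph_one (t : ℝ) :
    h1sph 1 t = -(t + Complex.I) * Complex.exp (t * Complex.I) / t ^ 2 := by
  rcases eq_or_ne t 0 with rfl | ht
  · simp [h1sph, jsph, ysph]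
  have ht' : (t : ℂ) ≠ 0 := by exact_mod_cast ht
  simp only [h1sph, jsph, ysph, Complex.exp_mul_I]
  push_cast
  field_simp
  linear_combination Complex.sin t * Complex.I_sq

theorem hasDerivAt_coe_complex (t : ℝ) : HasDerivAt (fun x : ℝ ↦ (x : ℂ)) 1 t :=
  Complex.ofRealCLM.hasDerivAt

theorem hasDerivAt_h1sph_zero {t : ℝ} (ht : t ≠ 0) : HasDerivAt (h1sph 0) (-h1sph 1 t) t := by
  have ht' : (t : ℂ) ≠ 0 := by exact_mod_cast ht
  have hid := hasDerivAt_coe_complex t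
  rw [funext h1sph_zero, h1sph_one]
  refine (((hid.mul_const Complex.I).cexp.const_mul (-Complex.I)).div hid ht').congr_deriv ?_
  field_simp
  linear_combination -(t : ℂ) * Complex.I_sq

theorem hasDerivAt_h1sph_one {t : ℝ} (ht : t ≠ 0) :
    HasDerivAt (h1sph 1) (h1sph 0 t - 2 / t * h1sph 1 t) t := by
  have ht' : (t : ℂ) ≠ 0 := by exact_mod_cast ht
  have hid := hasDerivAt_coe_complex t
  rw [funext h1sph_one, h1sph_zero]
  refine (((hid.add_const Complex.I).neg.mul (hid.mul_const Complex.I).cexp).div (hid.pow 2)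
    (pow_ne_zero 2 ht')).congr_deriv ?_
  simp only [Pi.mul_apply, Pi.neg_apply, Pi.pow_apply]
  field_simp
  linear_combination -(t : ℂ) ^ 2 * Complex.I_sq

theorem hasDerivAt_h1sph {t : ℝ} (ht : t ≠ 0) (n : ℕ) :
    HasDerivAt (h1sph n) (n / t * h1sph n t - h1sph (n + 1) t) t := by
  induction n using Nat.twoStepInduction with
  | zero => simpa using hasDerivAt_h1sph_zero ht
  | one =>
    refine (hasDerivAt_h1sph_one ht).congr_deriv ?_
    rw [h1sph_add_two]
    push_cast
    ring
  | more n ih ih_succ =>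
    have ht' : (t : ℂ) ≠ 0 := by exact_mod_cast ht
    have hcoeff : HasDerivAt (fun x : ℝ ↦ (2 * n + 3) / (x : ℂ)) (-(2 * n + 3) / t ^ 2) t := by
      have hid := hasDerivAt_coe_complex t
      exact ((hasDerivAt_const t (2 * (n : ℂ) + 3)).div hid ht').congr_deriv (by simp)
    rw [funext (h1sph_add_two n)]
    refine ((hcoeff.mul ih_succ).sub ih).congr_deriv ?_
    rw [h1sph_add_two (n + 1), h1sph_add_two n]
    push_cast
    field_simp
    ring

theorem jsph_succ_mul_ysph_sub_jsph_mul_ysph_succ {t : ℝ} (ht : t ≠ 0) (n : ℕ) :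
    jsph (n + 1) t * ysph n t - jsph n t * ysph (n + 1) t = 1 / t ^ 2 := by
  induction n with
  | zero =>
    simp only [jsph, ysph]
    field_simp
    linear_combination t * Real.sin_sq_add_cos_sq t
  | succ n ih =>
    rw [jsph, ysph, ← ih]
    ring

theorem one_div_sq_le_norm_h1sph_mul_norm_h1sph_succ {t : ℝ} (ht : t ≠ 0) (n : ℕ) :
    1 / t ^ 2 ≤ ‖h1sph n t‖ * ‖h1sph (n + 1) t‖ := by
  have him : (h1sph n t * starRingEnd ℂ (h1sph (n + 1) t)).im = 1 / t ^ 2 := by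
    rw [← jsph_succ_mul_ysph_sub_jsph_mul_ysph_succ ht n]
    simp only [h1sph, Complex.mul_im, Complex.conj_re, Complex.conj_im, Complex.add_re,
      Complex.add_im, Complex.mul_re, Complex.ofReal_re, Complex.ofReal_im, Complex.I_re,
      Complex.I_im]
    ring
  calc 1 / t ^ 2 = (h1sph n t * starRingEnd ℂ (h1sph (n + 1) t)).im := him.symm
    _ ≤ ‖h1sph n t * starRingEnd ℂ (h1sph (n + 1) t)‖ := Complex.im_le_norm _
    _ = ‖h1sph n t‖ * ‖h1sph (n + 1) t‖ := by rw [norm_mul, RCLike.norm_conj]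

theorem h1sph_ne_zero {t : ℝ} (ht : t ≠ 0) (n : ℕ) : h1sph n t ≠ 0 := by
  intro hzero
  have hwronskian := one_div_sq_le_norm_h1sph_mul_norm_h1sph_succ ht n
  rw [hzero, norm_zero, zero_mul] at hwronskian
  exact hwronskian.not_gt (by positivity)

theorem not_tendsto_h1sph_zero {t : ℝ} (ht : t ≠ 0) :
    ¬Tendsto (fun n ↦ h1sph n t) atTop (𝓝 0) := by
  intro hlim
  have hprod : Tendsto (fun n ↦ ‖h1sph n t‖ * ‖h1sph (n + 1) t‖) atTop (𝓝 0) := by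
    simpa using hlim.norm.mul ((tendsto_add_atTop_iff_nat 1).mpr hlim).norm
  have hle := ge_of_tendsto' hprod (one_div_sq_le_norm_h1sph_mul_norm_h1sph_succ ht)
  exact hle.not_gt (by positivity)

theorem eventually_norm_h1sph_le_norm_h1sph_succ {t : ℝ} (ht : t ≠ 0) :
    ∀ᶠ n in atTop, ‖h1sph n t‖ ≤ ‖h1sph (n + 1) t‖ := by
  have hcoeff : Tendsto (fun n : ℕ ↦ ‖((2 * n + 3) / t : ℝ)‖) atTop atTop := by
    simp only [norm_div]
    refine Tendsto.atTop_div_const (norm_pos_iff.mpr ht) (tendsto_norm_atTop_atTop.comp ?_)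
    exact tendsto_atTop_add_const_right _ _
      (tendsto_natCast_atTop_atTop.const_mul_atTop two_pos)
  refine eventually_norm_le_norm_succ_of_recurrence hcoeff (fun n ↦ ?_)
    (not_tendsto_h1sph_zero ht)
  rw [h1sph_add_two, Complex.real_smul]
  push_cast
  ring

/-- The remainder `w_n(t) = z_n(t) + n + 1` of the logarithmic derivative `z_n(t)` after its
leading term `-(n + 1)`. -/
noncomputable def zn1Remainder (n : ℕ) (t : ℝ) : ℂ := zn1 n t + (n + 1)

theorem zn1Remainder_eq {t : ℝ} (ht : t ≠ 0) (n : ℕ) :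
    zn1Remainder n t = 2 * n + 1 - t * h1sph (n + 1) t / h1sph n t := by
  have ht' : (t : ℂ) ≠ 0 := by exact_mod_cast ht
  have hn := h1sph_ne_zero ht n
  rw [zn1Remainder, zn1, (hasDerivAt_h1sph ht n).deriv]
  field_simp
  ring

theorem zn1Remainder_succ {t : ℝ} (ht : t ≠ 0) (n : ℕ) :
    zn1Remainder (n + 1) t = t * h1sph n t / h1sph (n + 1) t := by
  have ht' : (t : ℂ) ≠ 0 := by exact_mod_cast ht
  have hn := h1sph_ne_zero ht (n + 1)
  rw [zn1Remainder_eq ht, h1sph_add_two]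
  push_cast
  field_simp
  ring

theorem zn1Remainder_succ_mul {t : ℝ} (ht : t ≠ 0) (n : ℕ) :
    zn1Remainder (n + 1) t * (2 * n + 1 - zn1Remainder n t) = t ^ 2 := by
  have hn := h1sph_ne_zero ht n
  have hn_succ := h1sph_ne_zero ht (n + 1)
  rw [zn1Remainder_succ ht, zn1Remainder_eq ht]
  field_simp
  ring

theorem zn1Remainder_isBigO_one {t : ℝ} (ht : t ≠ 0) :
    (fun n ↦ zn1Remainder n t) =O[atTop] fun _ ↦ (1 : ℝ) := by
  rw [← map_add_atTop_eq_nat 1, isBigO_map]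
  refine .of_bound |t| ?_
  filter_upwards [eventually_norm_h1sph_le_norm_h1sph_succ ht] with n hn
  have hpos : 0 < ‖h1sph (n + 1) t‖ := norm_pos_iff.mpr (h1sph_ne_zero ht _)
  simp only [Function.comp_apply, zn1Remainder_succ ht, norm_div, norm_mul, Complex.norm_real,
    Real.norm_eq_abs, abs_one, mul_one]
  rw [div_le_iff₀ hpos]
  gcongr

theorem zn1Remainder_isBigO_inv {t : ℝ} (ht : t ≠ 0) :
    (fun n ↦ zn1Remainder n t) =O[atTop] fun n : ℕ ↦ (n : ℝ)⁻¹ :=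
  isBigO_inv_natCast_of_riccati (zn1Remainder_succ_mul ht) (zn1Remainder_isBigO_one ht)

theorem natCast_mul_zn1Remainder_sub_isBigO_inv {t : ℝ} (ht : t ≠ 0) :
    (fun n : ℕ ↦ n * zn1Remainder n t - (t : ℂ) ^ 2 / 2) =O[atTop] fun n : ℕ ↦ (n : ℝ)⁻¹ :=
  natCast_mul_sub_isBigO_of_riccati (zn1Remainder_succ_mul ht) (zn1Remainder_isBigO_one ht)
    (zn1Remainder_isBigO_inv ht)

theorem Lambda_n_asymptotic_general {s t : ℝ} (hs : s ≠ 0) (ht : t ≠ 0) :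
    ∃ C : ℝ, 0 < C ∧ ∃ N : ℕ, ∀ n : ℕ, N ≤ n →
      ‖zn1 n s * (1 + zn1 n t) - (n : ℂ) * ((n : ℂ) + 1) + (((s ^ 2 + t ^ 2) / 2 : ℝ) : ℂ)‖
        ≤ C / (n : ℝ) := by
  have hprod : (fun n ↦ zn1Remainder n s * zn1Remainder n t) =O[atTop] fun n : ℕ ↦ (n : ℝ)⁻¹ := by
    simpa only [mul_one] using (zn1Remainder_isBigO_inv hs).mul (zn1Remainder_isBigO_one ht)
  obtain ⟨C, hC, hbound⟩ := (((hprod.sub (zn1Remainder_isBigO_inv ht)).sub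
    (natCast_mul_zn1Remainder_sub_isBigO_inv hs)).sub
    (natCast_mul_zn1Remainder_sub_isBigO_inv ht)).exists_pos
  obtain ⟨N, hN⟩ := eventually_atTop.mp hbound.bound
  refine ⟨C, hC, N, fun n hn ↦ ?_⟩
  have hexpand : zn1 n s * (1 + zn1 n t) - (n : ℂ) * ((n : ℂ) + 1)
      + (((s ^ 2 + t ^ 2) / 2 : ℝ) : ℂ)
      = zn1Remainder n s * zn1Remainder n t - zn1Remainder n t
        - (n * zn1Remainder n s - (s : ℂ) ^ 2 / 2)
        - (n * zn1Remainder n t - (t : ℂ) ^ 2 / 2) := by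
    simp only [zn1Remainder]
    push_cast
    ring
  rw [hexpand]
  simpa only [norm_inv, Real.norm_natCast, ← div_eq_mul_inv] using hN n hn

/-- Asymptotics of `Λ_n(R) = z_n^{(1)}(κ_p R)(1 + z_n^{(1)}(κ_s R)) - n(n+1)`:
`Λ_n(R) = -(κ_p² + κ_s²) R²/2 + O(1/n)`. -/
theorem Lambda_n_asymptotic (κp κs R : ℝ) (hκp : 0 < κp) (hκs : 0 < κs) (hR : 0 < R) :
    ∃ C : ℝ, 0 < C ∧ ∃ N : ℕ, ∀ n : ℕ, N ≤ n →
      norm (zn1 n (κp * R) * (1 + zn1 n (κs * R)) - ((n : ℂ) * ((n : ℂ) + 1))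
          + (((κp ^ 2 + κs ^ 2) * R ^ 2 / 2 : ℝ) : ℂ))
        ≤ C / (n : ℝ) := by
  simpa only [mul_pow, ← add_mul] using
    Lambda_n_asymptotic_general (mul_pos hκp hR).ne' (mul_pos hκs hR).ne'
end

section
/- Fix t > 0. There exist a constant C > 0 and an integer N such that for every integer n ≥ N, the logarithmic derivative of the spherical Bessel function of the second kind satisfies −n − 1 + t²/(2n) − (5/12)·t²/n² − C/n³ ≤ t·y_n'(t)/y_n(t) ≤ −n − 1 + t²/(2n) + (11/12)·t²/n² + C/n³. -/
/-!
Factoring out the leading behaviour at the origin, `y_n(z) = -(2n-1)‼ z^{-(n+1)} b_n(z)`, gives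
even entire functions with `b_n(0) = 1` and `b_{n+1}'(z) = z b_n(z) / (2n+1)`. Comparing with
`(e^{z²/2})' = z e^{z²/2}` yields `|b_n(z)| ≤ e^{z²/2}` by induction, and one more integration
yields `b_n(z) → 1`. As `t y_{n+1}'/y_{n+1} = -(n+2) + t² b_n / ((2n+1) b_{n+1})` and, by the
three-term recurrence, `b_n - b_{n+1} = O(n⁻²)`, the logarithmic derivative of `y_n` is
`-n - 1 + t²/(2n-1) + O(n⁻³)`; finally `0 ≤ 1/(2n-1) - 1/(2n) ≤ 1/(2n²)`.
-/

open Filter Asymptotics Set Topology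
open scoped Nat

lemma norm_sub_le_of_norm_deriv_le_deriv_abs {E : Type*} [NormedAddCommGroup E] [NormedSpace ℝ E]
    {f f' : ℝ → E} {B B' : ℝ → ℝ} (hf : ∀ x, HasDerivAt f (f' x) x)
    (hB : ∀ x, HasDerivAt B (B' x) x) (bound : ∀ x, ‖f' x‖ ≤ B' |x|) (z : ℝ) :
    ‖f z - f 0‖ ≤ B |z| - B 0 := by
  have hg (s : ℝ) : HasDerivAt (fun s ↦ f (s * z) - f 0) (z • f' (s * z)) s := by
    simpa using ((hf (s * z)).scomp s ((hasDerivAt_id s).mul_const z)).sub_const (f 0)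
  have hG (s : ℝ) : HasDerivAt (fun s ↦ B (s * |z|) - B 0) (B' (s * |z|) * |z|) s := by
    simpa using ((hB (s * |z|)).comp s ((hasDerivAt_id s).mul_const |z|)).sub_const (B 0)
  have hgG (s : ℝ) (hs : s ∈ Ico 0 1) : ‖z • f' (s * z)‖ ≤ B' (s * |z|) * |z| := by
    have := bound (s * z)
    rw [abs_mul, abs_of_nonneg hs.1] at this
    rw [norm_smul, Real.norm_eq_abs, mul_comm]
    gcongr
  simpa using image_norm_le_of_norm_deriv_right_le_deriv_boundary (a := 0) (b := 1)
    (fun s _ ↦ (hg s).continuousAt.continuousWithinAt) (fun s _ ↦ (hg s).hasDerivWithinAt)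
    (by simp) hG hgG (right_mem_Icc.2 zero_le_one)

/-- The spherical Bessel function `y_n` divided by its leading term `-(2n-1)‼ / z^{n+1}` at the
origin, see `ysph_eq`. It is defined by recurrence rather than as a quotient so that its value at
`z = 0` is the correct one, see `ysphNormalized_apply_zero`. -/
noncomputable def ysphNormalized : ℕ → ℝ → ℝ
  | 0, z => Real.cos z
  | 1, z => Real.cos z + z * Real.sin z
  | (n + 2), z =>
      ysphNormalized (n + 1) z - z ^ 2 / ((2 * n + 1) * (2 * n + 3)) * ysphNormalized n z

lemma ysphNormalized_apply_zero (n : ℕ) : ysphNormalized n 0 = 1 := by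
  induction n using Nat.twoStepInduction with
  | zero => simp [ysphNormalized]
  | one => simp [ysphNormalized]
  | more n _ ih => simp [ysphNormalized, ih]

-- At `n = 0` truncated subtraction gives `0‼ = 1`, the conventional value of `(-1)‼`.
lemma ysph_eq {z : ℝ} (hz : z ≠ 0) (n : ℕ) :
    ysph n z = -(2 * n - 1)‼ * ysphNormalized n z / z ^ (n + 1) := by
  have doubleFactorial_succ (k : ℕ) :
      ((2 * (k + 1) - 1)‼ : ℝ) = (2 * k + 1) * (2 * k - 1)‼ :=
    mod_cast Nat.doubleFactorial_add_one (2 * k)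
  induction n using Nat.twoStepInduction with
  | zero => simp [ysph, ysphNormalized]
  | one =>
    simp only [ysph, ysphNormalized, Nat.reduceMul, Nat.reduceSub, Nat.doubleFactorial]
    push_cast
    field_simp
    ring
  | more n ih ih' =>
    rw [ysph, ih, ih', ysphNormalized, doubleFactorial_succ (n + 1), doubleFactorial_succ n]
    push_cast
    field_simp
    ring

lemma hasDerivAt_ysphNormalized_succ (n : ℕ) (z : ℝ) :
    HasDerivAt (ysphNormalized (n + 1)) (z * ysphNormalized n z / (2 * n + 1)) z := by
  have hasDerivAt_add_two (k : ℕ) {d d' : ℝ} (hd : HasDerivAt (ysphNormalized k) d z)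
      (hd' : HasDerivAt (ysphNormalized (k + 1)) d' z) :
      HasDerivAt (ysphNormalized (k + 2)) (d' - (2 * z / ((2 * k + 1) * (2 * k + 3)) *
        ysphNormalized k z + z ^ 2 / ((2 * k + 1) * (2 * k + 3)) * d)) z :=
    (hd'.fun_sub (((hasDerivAt_pow 2 z).div_const ((2 * (k : ℝ) + 1) * (2 * k + 3))).fun_mul
      hd)).congr_deriv (by simp)
  have hasDerivAt_one : HasDerivAt (ysphNormalized 1) (z * Real.cos z) z :=
    ((Real.hasDerivAt_cos z).fun_add
      ((hasDerivAt_id' z).fun_mul (Real.hasDerivAt_sin z))).congr_deriv (by simp)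
  induction n using Nat.twoStepInduction with
  | zero => simpa [ysphNormalized] using hasDerivAt_one
  | one =>
    refine (hasDerivAt_add_two 0 (Real.hasDerivAt_cos z) hasDerivAt_one).congr_deriv ?_
    simp only [ysphNormalized]
    push_cast
    ring
  | more n ih ih' =>
    refine (hasDerivAt_add_two (n + 1) ih ih').congr_deriv ?_
    simp only [ysphNormalized]
    push_cast
    field_simp
    ring

lemma abs_ysphNormalized_succ_sub_one_le_of_abs_le_exp {n : ℕ}
    (hn : ∀ x, |ysphNormalized n x| ≤ Real.exp (x ^ 2 / 2)) (z : ℝ) :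
    |ysphNormalized (n + 1) z - 1| ≤ (Real.exp (z ^ 2 / 2) - 1) / (2 * n + 1) := by
  have hB (x : ℝ) : HasDerivAt (fun x ↦ Real.exp (x ^ 2 / 2) / (2 * n + 1))
      (x * Real.exp (x ^ 2 / 2) / (2 * n + 1)) x := by
    refine (((hasDerivAt_pow 2 x).div_const 2).exp.div_const (2 * (n : ℝ) + 1)).congr_deriv ?_
    push_cast
    ring
  have bound (x : ℝ) : ‖x * ysphNormalized n x / (2 * n + 1)‖ ≤
      |x| * Real.exp (|x| ^ 2 / 2) / (2 * n + 1) := by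
    have denominator_pos : 0 < 2 * (n : ℝ) + 1 := by positivity
    rw [Real.norm_eq_abs, abs_div, abs_mul, sq_abs, abs_of_pos denominator_pos]
    gcongr
    exact hn x
  have := norm_sub_le_of_norm_deriv_le_deriv_abs (hasDerivAt_ysphNormalized_succ n) hB bound z
  simpa [ysphNormalized_apply_zero, sub_div] using this

lemma abs_ysphNormalized_le_exp (n : ℕ) (z : ℝ) :
    |ysphNormalized n z| ≤ Real.exp (z ^ 2 / 2) := by
  induction n generalizing z with
  | zero => exact (Real.abs_cos_le_one z).trans (Real.one_le_exp (by positivity))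
  | succ n ih =>
    have one_le_exp : 1 ≤ Real.exp (z ^ 2 / 2) := Real.one_le_exp (by positivity)
    calc |ysphNormalized (n + 1) z| ≤ |ysphNormalized (n + 1) z - 1| + 1 := by
          simpa using abs_add_le (ysphNormalized (n + 1) z - 1) 1
      _ ≤ (Real.exp (z ^ 2 / 2) - 1) / (2 * n + 1) + 1 := by
          gcongr
          exact abs_ysphNormalized_succ_sub_one_le_of_abs_le_exp ih z
      _ ≤ (Real.exp (z ^ 2 / 2) - 1) + 1 := by
          gcongr
          exact div_le_self (by linarith) (by linarith [n.cast_nonneg (α := ℝ)])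
      _ = Real.exp (z ^ 2 / 2) := sub_add_cancel _ _

lemma tendsto_ysphNormalized_atTop (z : ℝ) :
    Tendsto (fun n ↦ ysphNormalized n z) atTop (𝓝 1) := by
  rw [← tendsto_add_atTop_iff_nat 1, tendsto_iff_norm_sub_tendsto_zero]
  refine squeeze_zero (fun _ ↦ norm_nonneg _) (fun n ↦
    abs_ysphNormalized_succ_sub_one_le_of_abs_le_exp (abs_ysphNormalized_le_exp n) z) ?_
  refine Tendsto.const_div_atTop ?_ _
  exact tendsto_atTop_add_const_right _ _
    (tendsto_natCast_atTop_atTop.const_mul_atTop zero_lt_two)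

lemma logderiv_ysph_succ {t : ℝ} (ht : t ≠ 0) {n : ℕ} (hn : ysphNormalized (n + 1) t ≠ 0) :
    t * deriv (ysph (n + 1)) t / ysph (n + 1) t =
      t ^ 2 * ysphNormalized n t / ((2 * n + 1) * ysphNormalized (n + 1) t) - (n + 2) := by
  have ysph_eventuallyEq : ysph (n + 1) =ᶠ[𝓝 t] fun z ↦
      -(2 * (n + 1) - 1)‼ * ysphNormalized (n + 1) z / z ^ (n + 2) :=
    (eventually_ne_nhds ht).mono fun z hz ↦ ysph_eq hz (n + 1)
  have hasDerivAt_quotient := ((hasDerivAt_ysphNormalized_succ n t).const_mul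
    (-(2 * (n + 1) - 1)‼ : ℝ)).fun_div (hasDerivAt_pow (n + 2) t) (pow_ne_zero _ ht)
  have doubleFactorial_ne_zero : ((2 * (n + 1) - 1)‼ : ℝ) ≠ 0 :=
    mod_cast (Nat.doubleFactorial_pos _).ne'
  rw [ysph_eventuallyEq.deriv_eq, hasDerivAt_quotient.deriv, ysph_eq ht]
  push_cast
  field_simp
  ring

lemma logderiv_ysph_add_two {t : ℝ} (ht : t ≠ 0) {n : ℕ} (hn : ysphNormalized (n + 2) t ≠ 0) :
    t * deriv (ysph (n + 2)) t / ysph (n + 2) t = -(n + 3) + t ^ 2 / (2 * n + 3) +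
      t ^ 4 * (ysphNormalized n t / ysphNormalized (n + 2) t) /
        ((2 * n + 1) * (2 * n + 3) ^ 2) := by
  have recurrence : ysphNormalized (n + 1) t = ysphNormalized (n + 2) t +
      t ^ 2 / ((2 * n + 1) * (2 * n + 3)) * ysphNormalized n t := by
    rw [ysphNormalized, sub_add_cancel]
  rw [logderiv_ysph_succ ht hn, recurrence]
  push_cast
  field_simp
  ring

theorem logderiv_ysph_sub_isBigO {t : ℝ} (ht : t ≠ 0) :
    (fun n : ℕ ↦ t * deriv (ysph n) t / ysph n t - (-(n : ℝ) - 1 + t ^ 2 / (2 * n - 1)))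
      =O[atTop] fun n ↦ 1 / (n : ℝ) ^ 3 := by
  have tendsto_ratio : Tendsto (fun n ↦ t ^ 4 * (ysphNormalized n t / ysphNormalized (n + 2) t))
      atTop (𝓝 (t ^ 4 * (1 / 1))) :=
    ((tendsto_ysphNormalized_atTop t).div ((tendsto_add_atTop_iff_nat 2).2
      (tendsto_ysphNormalized_atTop t)) one_ne_zero).const_mul _
  have denominator_isBigO : (fun n : ℕ ↦ 1 / ((2 * (n : ℝ) + 1) * (2 * n + 3) ^ 2))
      =O[atTop] fun n : ℕ ↦ 1 / ((n + 2 : ℕ) : ℝ) ^ 3 := by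
    refine IsBigO.of_norm_le fun n ↦ ?_
    rw [Real.norm_of_nonneg (by positivity)]
    gcongr
    push_cast
    nlinarith [n.cast_nonneg (α := ℝ)]
  rw [← map_add_atTop_eq_nat 2, isBigO_map]
  refine ((tendsto_ratio.isBigO_one ℝ).mul denominator_isBigO).congr' ?_
    (.of_forall fun n ↦ one_mul _)
  filter_upwards [(tendsto_add_atTop_iff_nat 2).2 (tendsto_ysphNormalized_atTop t)
    |>.eventually_ne one_ne_zero] with n hn
  simp only [Function.comp_apply]
  rw [logderiv_ysph_add_two ht hn]
  push_cast
  ring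

lemma div_two_mul_sub_one_mem_Icc {a x : ℝ} (ha : 0 ≤ a) (hx : 1 ≤ x) :
    a / (2 * x - 1) ∈ Icc (a / (2 * x)) (a / (2 * x) + a / x ^ 2 / 2) := by
  have two_mul_sub_one_pos : 0 < 2 * x - 1 := by linarith
  have gap : a / (2 * x - 1) - a / (2 * x) = a / (x * (2 * x - 1)) / 2 := by
    field_simp
    ring
  refine ⟨by gcongr; linarith, ?_⟩
  rw [← sub_le_iff_le_add', gap]
  gcongr
  nlinarith

theorem logderiv_spherical_bessel_y_asymptotic_general (t : ℝ) (ht : t ≠ 0) :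
    ∃ C : ℝ, 0 < C ∧ ∃ N : ℕ, ∀ n : ℕ, N ≤ n →
      -(n : ℝ) - 1 + t ^ 2 / (2 * (n : ℝ)) - (5/12) * t ^ 2 / (n : ℝ) ^ 2 - C / (n : ℝ) ^ 3
        ≤ t * deriv (ysph n) t / ysph n t ∧
      t * deriv (ysph n) t / ysph n t
        ≤ -(n : ℝ) - 1 + t ^ 2 / (2 * (n : ℝ)) + (11/12) * t ^ 2 / (n : ℝ) ^ 2
          + C / (n : ℝ) ^ 3 := by
  obtain ⟨C, hC, hO⟩ := (logderiv_ysph_sub_isBigO ht).exists_pos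
  obtain ⟨N, hN⟩ := eventually_atTop.1 hO.bound
  refine ⟨C, hC, max N 1, fun n hn ↦ ?_⟩
  have error_le := hN n (le_of_max_le_left hn)
  have one_le : (1 : ℝ) ≤ n := mod_cast le_of_max_le_right hn
  obtain ⟨lower, upper⟩ := div_two_mul_sub_one_mem_Icc (sq_nonneg t) one_le
  have slack : 0 ≤ t ^ 2 / (n : ℝ) ^ 2 := by positivity
  rw [Real.norm_eq_abs, Real.norm_of_nonneg (by positivity), mul_one_div, abs_le] at error_le
  simp only [mul_div_assoc (_ / _ : ℝ)]
  constructor <;> linarith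

/-- Asymptotic two-sided bound on the logarithmic derivative
`t y_n'(t)/y_n(t)` of the spherical Bessel function of the second kind. -/
theorem logderiv_spherical_bessel_y_asymptotic (t : ℝ) (ht : 0 < t) :
    ∃ C : ℝ, 0 < C ∧ ∃ N : ℕ, ∀ n : ℕ, N ≤ n →
      -(n : ℝ) - 1 + t ^ 2 / (2 * (n : ℝ)) - (5/12) * t ^ 2 / (n : ℝ) ^ 2 - C / (n : ℝ) ^ 3
        ≤ t * deriv (ysph n) t / ysph n t ∧
      t * deriv (ysph n) t / ysph n t
        ≤ -(n : ℝ) - 1 + t ^ 2 / (2 * (n : ℝ)) + (11/12) * t ^ 2 / (n : ℝ) ^ 2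
          + C / (n : ℝ) ^ 3 :=
  logderiv_spherical_bessel_y_asymptotic_general t ht.ne'
end

section
/- Fix z > 0. There exist constants C > 0 and ν₀ > z + 1 such that for every real ν ≥ ν₀, |(ν−1)·log((ν−1)/z + √(((ν−1)/z)² − 1)) − ν·log(ν/z + √((ν/z)² − 1)) − (−log(2ν/z) − 1 + 1/(2ν))| ≤ C/ν². -/
/-!
Both logarithms are values of `arcosh`. With `D ν = ν (arcosh (ν / z) - log (2 ν / z))`,
`A(ν) = D (ν - 1) - D ν + (ν - 1) log (1 - 1 / ν) - log (2 ν / z)`. The expansion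
`arcosh x = log (2 x) - 1 / (4 x²) + O(1 / x⁴)` gives `D ν = -z² / (4 ν) + O(1 / ν³)`, and the
leading terms of `D (ν - 1)` and `D ν` cancel to order `1 / ν²`. The terms `-1 + 1 / (2 ν)` come
from `(1 - y) log (1 - y) = -y + y² / 2 + O(y³)` at `y = 1 / ν`.
-/

open Asymptotics Filter Real Topology

theorem abs_log_one_add_sub_div_sq_le {t : ℝ} (ht : 0 ≤ t) :
    |log (1 + t) - t / (1 + t) ^ 2| ≤ 2 * t ^ 2 := by
  have ht' : 0 < 1 + t := by positivity
  have lower : t / (1 + t) ^ 2 ≤ log (1 + t) := calc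
    t / (1 + t) ^ 2 ≤ t / (1 + t) := by gcongr; nlinarith
    _ = 1 - (1 + t)⁻¹ := by field_simp; ring
    _ ≤ log (1 + t) := one_sub_inv_le_log_of_pos ht'
  have upper : log (1 + t) ≤ t := by linarith [log_le_sub_one_of_pos ht']
  have defect : t - t / (1 + t) ^ 2 ≤ 2 * t ^ 2 := by
    rw [sub_le_comm, le_div_iff₀ (by positivity)]
    nlinarith [pow_nonneg ht 3, pow_nonneg ht 4]
  rw [abs_of_nonneg (sub_nonneg.2 lower)]
  linarith

theorem two_mul_cosh_eq_exp_mul (u : ℝ) : 2 * cosh u = exp u * (1 + exp (-2 * u)) := by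
  rw [cosh_eq, mul_add, ← exp_add]
  ring_nf

theorem abs_sub_log_two_mul_cosh_add_le (u : ℝ) :
    |u - log (2 * cosh u) + 1 / (4 * cosh u ^ 2)| ≤ 2 * exp (-u) ^ 4 := by
  set t := exp (-2 * u) with ht
  have ht_sq : t ^ 2 = exp (-u) ^ 4 := by
    rw [ht, ← exp_nat_mul, ← exp_nat_mul]; ring_nf
  have hlog : log (2 * cosh u) = u + log (1 + t) := by
    rw [two_mul_cosh_eq_exp_mul, log_mul (by positivity) (by positivity), log_exp]
  have hinv : 1 / (4 * cosh u ^ 2) = t / (1 + t) ^ 2 := by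
    have ht_exp : t * exp u ^ 2 = 1 := by
      rw [ht, ← exp_nat_mul, ← exp_add]; simp
    calc 1 / (4 * cosh u ^ 2) = 1 / (exp u * (1 + t)) ^ 2 := by
          rw [← two_mul_cosh_eq_exp_mul]; ring
      _ = t / (1 + t) ^ 2 := by
          rw [div_eq_div_iff (by positivity) (by positivity)]
          linear_combination (-(1 + t) ^ 2) * ht_exp
  rw [hlog, hinv, ← ht_sq, ← abs_neg]
  convert abs_log_one_add_sub_div_sq_le (exp_pos (-2 * u)).le using 2
  ring

theorem abs_arcosh_sub_log_two_mul_add_le {x : ℝ} (hx : 1 ≤ x) :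
    |arcosh x - log (2 * x) + 1 / (4 * x ^ 2)| ≤ 2 * x⁻¹ ^ 4 := by
  have hexp : exp (-arcosh x) ≤ x⁻¹ := by
    rw [exp_neg, exp_arcosh hx]
    gcongr
    exact le_add_of_nonneg_right (sqrt_nonneg _)
  calc |arcosh x - log (2 * x) + 1 / (4 * x ^ 2)| ≤ 2 * exp (-arcosh x) ^ 4 := by
        simpa only [cosh_arcosh hx] using abs_sub_log_two_mul_cosh_add_le (arcosh x)
    _ ≤ 2 * x⁻¹ ^ 4 := by gcongr

theorem arcosh_sub_log_two_mul_isBigO :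
    (fun x ↦ arcosh x - log (2 * x) + 1 / (4 * x ^ 2)) =O[atTop] fun x ↦ x⁻¹ ^ 4 := by
  refine .of_bound 2 ((eventually_ge_atTop 1).mono fun x hx ↦ ?_)
  rw [norm_eq_abs, norm_of_nonneg (by positivity)]
  exact abs_arcosh_sub_log_two_mul_add_le hx

theorem mul_arcosh_div_sub_log_isBigO {z : ℝ} (hz : 0 < z) :
    (fun ν ↦ ν * (arcosh (ν / z) - log (2 * (ν / z))) - ν⁻¹ * (-z ^ 2 / 4))
      =O[atTop] fun ν ↦ ν⁻¹ ^ 3 := by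
  have hscaled := (isBigO_refl (fun ν : ℝ ↦ ν) atTop).mul
    (arcosh_sub_log_two_mul_isBigO.comp_tendsto (tendsto_id.atTop_div_const hz))
  have hpow : (fun ν ↦ ν * (ν / z)⁻¹ ^ 4) =O[atTop] fun ν ↦ ν⁻¹ ^ 3 := by
    refine (isBigO_const_mul_self (z ^ 4) (fun ν : ℝ ↦ ν⁻¹ ^ 3) atTop).congr' ?_ .rfl
    filter_upwards [eventually_ne_atTop 0] with ν hν
    field_simp
  refine (hscaled.trans hpow).congr' ?_ .rfl
  filter_upwards [eventually_ne_atTop 0] with ν hν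
  simp only [Function.comp_apply, id_eq]
  field_simp
  ring

theorem inv_sub_const_isBigO_inv (a : ℝ) : (fun t ↦ (t - a)⁻¹) =O[atTop] fun t ↦ t⁻¹ :=
  (IsEquivalent.refl.sub_isLittleO (isLittleO_const_id_atTop a)).inv.isBigO

theorem isBigO_comp_sub_const_sub_self {E : Type*} [NormedAddCommGroup E] [NormedSpace ℝ E]
    {f : ℝ → E} {c : E} (hf : (fun t ↦ f t - t⁻¹ • c) =O[atTop] fun t ↦ t⁻¹ ^ 2) (a : ℝ) :
    (fun t ↦ f (t - a) - f t) =O[atTop] fun t ↦ t⁻¹ ^ 2 := by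
  have hshift : (fun t ↦ f (t - a) - (t - a)⁻¹ • c) =O[atTop] fun t ↦ t⁻¹ ^ 2 :=
    (hf.comp_tendsto (tendsto_atTop_add_const_right _ (-a) tendsto_id)).trans
      ((inv_sub_const_isBigO_inv a).pow 2)
  have hinv : (fun t ↦ (t - a)⁻¹ - t⁻¹) =O[atTop] fun t ↦ t⁻¹ ^ 2 := by
    refine (((inv_sub_const_isBigO_inv a).mul (isBigO_refl (·⁻¹) atTop)).const_mul_left a).congr'
      ?_ (.of_eq <| funext fun t ↦ (sq _).symm)
    filter_upwards [eventually_ne_atTop 0, eventually_ne_atTop a] with t ht hta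
    have := sub_ne_zero.2 hta
    field_simp
    ring
  have hleading : (fun t ↦ ((t - a)⁻¹ - t⁻¹) • c) =O[atTop] fun t ↦ t⁻¹ ^ 2 := by
    simpa using hinv.smul (isBigO_const_const c (one_ne_zero (α := ℝ)) atTop)
  refine ((hshift.sub hf).add hleading).congr_left fun t ↦ ?_
  rw [sub_smul]
  abel

theorem sum_range_add_log_one_sub_isBigO (n : ℕ) :
    (fun y : ℝ ↦ (∑ i ∈ Finset.range n, y ^ (i + 1) / (i + 1)) + log (1 - y))
      =O[𝓝 0] fun y ↦ y ^ (n + 1) := by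
  have hsmall : ∀ᶠ y : ℝ in 𝓝 0, |y| < 1 / 2 := by
    simpa only [sub_zero] using eventually_abs_sub_lt (0 : ℝ) one_half_pos
  refine .of_bound 2 (hsmall.mono fun y hy ↦ ?_)
  rw [norm_eq_abs, norm_pow, norm_eq_abs]
  refine (abs_log_sub_add_sum_range_le (by linarith) n).trans ?_
  rw [div_le_iff₀ (by linarith)]
  nlinarith [pow_nonneg (abs_nonneg y) (n + 1)]

theorem one_sub_mul_log_one_sub_isBigO :
    (fun y : ℝ ↦ (1 - y) * log (1 - y) + y - y ^ 2 / 2) =O[𝓝 0] fun y ↦ y ^ 3 := by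
  have hfactor : (fun y : ℝ ↦ 1 - y) =O[𝓝 0] fun _ ↦ (1 : ℝ) :=
    (continuous_const.sub continuous_id).continuousAt.tendsto.isBigO_one ℝ
  have hlog := (hfactor.mul (sum_range_add_log_one_sub_isBigO 2)).congr_right fun y ↦ one_mul _
  refine (hlog.add (isBigO_const_mul_self (1 / 2) (fun y : ℝ ↦ y ^ 3) (𝓝 0))).congr_left fun y ↦ ?_
  simp only [Finset.sum_range_succ, Finset.sum_range_zero, Nat.cast_zero, Nat.cast_one]
  ring

theorem sub_one_mul_log_one_sub_inv_isBigO :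
    (fun ν : ℝ ↦ (ν - 1) * log (1 - ν⁻¹) + 1 - 1 / (2 * ν)) =O[atTop] fun ν ↦ ν⁻¹ ^ 2 := by
  refine ((isBigO_refl (fun ν : ℝ ↦ ν) atTop).mul
    (one_sub_mul_log_one_sub_isBigO.comp_tendsto tendsto_inv_atTop_zero)).congr' ?_ ?_
  all_goals
    filter_upwards [eventually_ne_atTop 0] with ν hν
    simp only [Function.comp_apply]
    field_simp

theorem sub_one_mul_arcosh_sub_mul_arcosh_isBigO {z : ℝ} (hz : 0 < z) :
    (fun ν ↦ (ν - 1) * arcosh ((ν - 1) / z) - ν * arcosh (ν / z)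
      - (-log (2 * ν / z) - 1 + 1 / (2 * ν))) =O[atTop] fun ν ↦ ν⁻¹ ^ 2 := by
  have hpow : (fun ν : ℝ ↦ ν⁻¹ ^ 3) =O[atTop] fun ν ↦ ν⁻¹ ^ 2 :=
    (isLittleO_pow_pow (by norm_num)).isBigO.comp_tendsto tendsto_inv_atTop_zero
  have hdiff := isBigO_comp_sub_const_sub_self ((mul_arcosh_div_sub_log_isBigO hz).trans hpow) 1
  refine (hdiff.add sub_one_mul_log_one_sub_inv_isBigO).congr' ?_ .rfl
  filter_upwards [eventually_gt_atTop 1] with ν hν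
  have hlog : log (2 * ((ν - 1) / z)) = log (2 * ν / z) + log (1 - ν⁻¹) := by
    rw [← log_mul (by positivity) (sub_pos.2 (inv_lt_one_of_one_lt₀ hν)).ne']
    congr 1
    field_simp
  rw [hlog, ← mul_div_assoc 2 ν z]
  ring

/-- Asymptotics of `A(ν) = (ν-1) log((ν-1)/z + √(((ν-1)/z)² - 1))
- ν log(ν/z + √((ν/z)² - 1)) = -log(2ν/z) - 1 + 1/(2ν) + O(1/ν²)`. -/
theorem A_asymptotic (z : ℝ) (hz : 0 < z) :
    ∃ C : ℝ, 0 < C ∧ ∃ ν₀ : ℝ, z + 1 < ν₀ ∧ ∀ ν : ℝ, ν₀ ≤ ν →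
      |(ν - 1) * Real.log ((ν - 1) / z + Real.sqrt (((ν - 1) / z) ^ 2 - 1))
          - ν * Real.log (ν / z + Real.sqrt ((ν / z) ^ 2 - 1))
          - (-Real.log (2 * ν / z) - 1 + 1 / (2 * ν))| ≤ C / ν ^ 2 := by
  obtain ⟨C, hC, hbound⟩ := (sub_one_mul_arcosh_sub_mul_arcosh_isBigO hz).exists_pos
  obtain ⟨ν₀, hν₀⟩ := ((eventually_gt_atTop (z + 1)).and hbound.bound).exists_forall_of_atTop
  refine ⟨C, hC, ν₀, (hν₀ ν₀ le_rfl).1, fun ν hν ↦ ?_⟩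
  simpa [div_eq_mul_inv, arcosh] using (hν₀ ν hν).2
end

section
/- Fix z > 0. Define, for real ν > z + 1, A(ν) = (ν−1)·log((ν−1)/z + √(((ν−1)/z)² − 1)) − ν·log(ν/z + √((ν/z)² − 1)) and B(ν) = √(ν² − z²) − √((ν−1)² − z²). Then there exist constants C > 0 and ν₀ > z + 1 such that for every real ν ≥ ν₀, |exp(A(ν) + B(ν)) − (z/(2ν) + (z/4)/ν²)| ≤ C/ν³. -/
/-!
The exponent is minus the increment over `[ν - 1, ν]` of the Debye phase
`Φ(x) = x arcosh (x / z) - √(x² - z²)`, whose derivative is `arcosh (x / z)`. Since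
`arcosh y = log (2 y) + O(y⁻²)`, the mean value inequality replaces `Φ` by the elementary primitive
`x log (2 x / z) - x` of `log (2 x / z)` at the cost of `O(ν⁻²)`, and expanding `log (1 - 1 / ν)`
shows that the increment is `log (2 ν / z) - 1 / (2 ν) + O(ν⁻²)`. Exponentiating its negative gives
`z / (2 ν) * (1 + 1 / (2 ν) + O(ν⁻²))`.
-/

open Asymptotics Filter Real Set Topology

/-- The phase of Debye's expansions of the Bessel functions of order `x` at the argument `z`. With
`x = z cosh α` it is usually written `x (α - tanh α)`. -/
noncomputable def debyePhase (z x : ℝ) : ℝ :=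
  x * arcosh (x / z) - √(x ^ 2 - z ^ 2)

/-- A primitive of `x ↦ log (c * x)`. With `c = 2 / z` it is the elementary function whose
increments approximate those of `debyePhase z`. -/
noncomputable def logPrimitive (c x : ℝ) : ℝ :=
  x * log (c * x) - x

theorem abs_arcosh_sub_log_two_mul_le {y : ℝ} (hy : 1 ≤ y) :
    |arcosh y - log (2 * y)| ≤ (y ^ 2)⁻¹ := by
  have two_mul_eq : 2 * y = exp (arcosh y) * (1 + exp (-(2 * arcosh y))) := by
    rw [mul_add, ← exp_add, mul_one]
    nth_rw 1 [← cosh_arcosh hy, cosh_eq]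
    ring_nf
  have log_eq : log (2 * y) = arcosh y + log (1 + exp (-(2 * arcosh y))) := by
    rw [two_mul_eq, log_mul (by positivity) (by positivity), log_exp]
  have exp_arcosh_ge : y ≤ exp (arcosh y) := by
    rw [exp_arcosh hy]
    exact le_add_of_nonneg_right (sqrt_nonneg _)
  rw [log_eq, sub_add_cancel_left, abs_neg, abs_of_nonneg (log_nonneg (by simp [exp_nonneg]))]
  calc log (1 + exp (-(2 * arcosh y)))
      ≤ exp (-(2 * arcosh y)) := by
        linarith [log_le_sub_one_of_pos (show 0 < 1 + exp (-(2 * arcosh y)) by positivity)]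
    _ = (exp (arcosh y) ^ 2)⁻¹ := by rw [exp_neg, ← exp_nat_mul, Nat.cast_ofNat]
    _ ≤ (y ^ 2)⁻¹ := by gcongr

theorem hasDerivAt_debyePhase {z x : ℝ} (hz : 0 < z) (hx : z < x) :
    HasDerivAt (debyePhase z) (arcosh (x / z)) x := by
  have radicand_pos : 0 < x ^ 2 - z ^ 2 := by nlinarith
  have sqrt_scaled : √((x / z) ^ 2 - 1) = √(x ^ 2 - z ^ 2) / z := by
    rw [← div_self (pow_ne_zero 2 hz.ne'), div_pow, ← sub_div, sqrt_div' _ (sq_nonneg z),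
      sqrt_sq hz.le]
  have arcosh_deriv : HasDerivAt (fun t ↦ arcosh (t / z)) (√(x ^ 2 - z ^ 2))⁻¹ x := by
    refine ((hasDerivAt_arcosh ((one_lt_div hz).2 hx)).comp x
      ((hasDerivAt_id x).div_const z)).congr_deriv ?_
    rw [sqrt_scaled]
    field_simp
  have sqrt_deriv : HasDerivAt (fun t ↦ √(t ^ 2 - z ^ 2)) (x / √(x ^ 2 - z ^ 2)) x := by
    refine (((hasDerivAt_pow 2 x).sub_const (z ^ 2)).sqrt radicand_pos.ne').congr_deriv ?_
    field_simp
    norm_num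
  refine (((hasDerivAt_id x).mul arcosh_deriv).sub sqrt_deriv).congr_deriv ?_
  simp only [id, one_mul, div_eq_mul_inv, add_sub_cancel_right]

theorem hasDerivAt_logPrimitive {c x : ℝ} (hc : c ≠ 0) (hx : x ≠ 0) :
    HasDerivAt (logPrimitive c) (log (c * x)) x := by
  refine (((hasDerivAt_id x).mul (((hasDerivAt_id x).const_mul c).log (mul_ne_zero hc hx))).sub
    (hasDerivAt_id x)).congr_deriv ?_
  simp only [id]
  field_simp
  ring

theorem abs_debyePhase_sub_sub_logPrimitive_sub_le {z a b : ℝ} (hz : 0 < z) (ha : z < a)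
    (hab : a ≤ b) :
    |(debyePhase z b - debyePhase z a) - (logPrimitive (2 / z) b - logPrimitive (2 / z) a)| ≤
      z ^ 2 / a ^ 2 * (b - a) := by
  have a_pos : 0 < a := hz.trans ha
  have hderiv (x : ℝ) (hx : x ∈ Icc a b) :
      HasDerivWithinAt (fun t ↦ debyePhase z t - logPrimitive (2 / z) t)
        (arcosh (x / z) - log (2 / z * x)) (Icc a b) x :=
    ((hasDerivAt_debyePhase hz (ha.trans_le hx.1)).sub
      (hasDerivAt_logPrimitive (by positivity) (a_pos.trans_le hx.1).ne')).hasDerivWithinAt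
  have hbound (x : ℝ) (hx : x ∈ Icc a b) :
      ‖arcosh (x / z) - log (2 / z * x)‖ ≤ z ^ 2 / a ^ 2 :=
    calc |arcosh (x / z) - log (2 / z * x)|
        = |arcosh (x / z) - log (2 * (x / z))| := by rw [div_mul_eq_mul_div, mul_div_assoc]
      _ ≤ ((x / z) ^ 2)⁻¹ :=
        abs_arcosh_sub_log_two_mul_le ((one_le_div hz).2 (ha.le.trans hx.1))
      _ = z ^ 2 / x ^ 2 := by rw [div_pow, inv_div]
      _ ≤ z ^ 2 / a ^ 2 := by
        gcongr
        exact hx.1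
  have mean_value := (convex_Icc a b).norm_image_sub_le_of_norm_hasDerivWithin_le hderiv hbound
    (left_mem_Icc.2 hab) (right_mem_Icc.2 hab)
  rwa [norm_eq_abs, norm_eq_abs, abs_of_nonneg (sub_nonneg.2 hab), sub_sub_sub_comm] at mean_value

theorem abs_one_sub_div_mul_log_one_sub_add_le {u : ℝ} (hu₀ : 0 < u) (hu₁ : u < 1) :
    |(1 - u) / u * log (1 - u) + (1 - u / 2)| ≤ 3 / 2 * u ^ 2 := by
  have one_sub_pos : 0 < 1 - u := sub_pos.2 hu₁
  have log_taylor : |u + u ^ 2 / 2 + log (1 - u)| ≤ u ^ 3 / (1 - u) := by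
    simpa [Finset.sum_range_succ, abs_of_pos hu₀, one_add_one_eq_two] using
      abs_log_sub_add_sum_range_le (abs_lt.2 ⟨by linarith, hu₁⟩) 2
  calc |(1 - u) / u * log (1 - u) + (1 - u / 2)|
      = |(1 - u) / u * (u + u ^ 2 / 2 + log (1 - u)) + u ^ 2 / 2| := by
        congr 1
        field_simp
        ring
    _ ≤ (1 - u) / u * |u + u ^ 2 / 2 + log (1 - u)| + u ^ 2 / 2 := by
        refine (abs_add_le _ _).trans_eq ?_
        rw [abs_mul, abs_of_pos (div_pos one_sub_pos hu₀),
          abs_of_nonneg (show 0 ≤ u ^ 2 / 2 by positivity)]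
    _ ≤ (1 - u) / u * (u ^ 3 / (1 - u)) + u ^ 2 / 2 := by gcongr
    _ = 3 / 2 * u ^ 2 := by
        field_simp
        norm_num

theorem abs_logPrimitive_sub_logPrimitive_sub_one_sub_le {c x : ℝ} (hc : c ≠ 0) (hx : 1 < x) :
    |logPrimitive c x - logPrimitive c (x - 1) - (log (c * x) - 1 / (2 * x))| ≤
      3 / 2 / x ^ 2 := by
  have x_pos : 0 < x := one_pos.trans hx
  have inv_lt_one : x⁻¹ < 1 := inv_lt_one_of_one_lt₀ hx
  have log_pred : log (c * (x - 1)) = log (c * x) + log (1 - x⁻¹) := by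
    rw [← log_mul (by positivity) (sub_pos.2 inv_lt_one).ne']
    congr 1
    field_simp
  have increment_eq : logPrimitive c x - logPrimitive c (x - 1) - (log (c * x) - 1 / (2 * x)) =
      -((1 - x⁻¹) / x⁻¹ * log (1 - x⁻¹) + (1 - x⁻¹ / 2)) := by
    rw [logPrimitive, logPrimitive, log_pred]
    field_simp
    ring
  rw [increment_eq, abs_neg, div_eq_mul_inv (3 / 2), ← inv_pow]
  exact abs_one_sub_div_mul_log_one_sub_add_le (inv_pos.2 x_pos) inv_lt_one

theorem debyePhase_sub_debyePhase_sub_one_isBigO {z : ℝ} (hz : 0 < z) :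
    (fun ν ↦ debyePhase z ν - debyePhase z (ν - 1) - (log (2 / z * ν) - 1 / (2 * ν)))
      =O[atTop] fun ν ↦ (1 / (2 * ν)) ^ 2 := by
  refine IsBigO.of_bound (16 * z ^ 2 + 6) ?_
  filter_upwards [eventually_gt_atTop (z + 1), eventually_ge_atTop 2] with ν hzν hν
  have phase_bound : |(debyePhase z ν - debyePhase z (ν - 1)) -
      (logPrimitive (2 / z) ν - logPrimitive (2 / z) (ν - 1))| ≤ 4 * z ^ 2 / ν ^ 2 :=
    calc _ ≤ z ^ 2 / (ν - 1) ^ 2 * (ν - (ν - 1)) :=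
          abs_debyePhase_sub_sub_logPrimitive_sub_le hz (by linarith) (by linarith)
      _ ≤ z ^ 2 / (ν / 2) ^ 2 := by
          rw [sub_sub_cancel, mul_one]
          gcongr
          linarith
      _ = 4 * z ^ 2 / ν ^ 2 := by
          field_simp
          norm_num
  have log_bound := abs_logPrimitive_sub_logPrimitive_sub_one_sub_le (c := 2 / z) (by positivity)
    (show 1 < ν by linarith)
  calc _ ≤ 4 * z ^ 2 / ν ^ 2 + 3 / 2 / ν ^ 2 :=
        (abs_sub_le _ _ _).trans (add_le_add phase_bound log_bound)
    _ = (16 * z ^ 2 + 6) * ‖(1 / (2 * ν)) ^ 2‖ := by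
        rw [norm_of_nonneg (by positivity)]
        field_simp
        ring

theorem exp_sub_one_add_isBigO_sq {α : Type*} {l : Filter α} {f g : α → ℝ}
    (hg : Tendsto g l (𝓝 0)) (hfg : (fun x ↦ f x - g x) =O[l] fun x ↦ g x ^ 2) :
    (fun x ↦ exp (f x) - (1 + g x)) =O[l] fun x ↦ g x ^ 2 := by
  have sq_isBigO : (fun x ↦ g x ^ 2) =O[l] g := by
    simpa [sq] using (hg.isBigO_one ℝ).mul (isBigO_refl g l)
  have f_isBigO : f =O[l] g := by
    simpa using (hfg.trans sq_isBigO).add (isBigO_refl g l)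
  have exp_taylor : (fun x ↦ exp (f x) - (1 + f x)) =O[l] fun x ↦ f x ^ 2 := by
    simpa [Finset.sum_range_succ, Function.comp_def] using
      (exp_sub_sum_range_isBigO_pow 2).comp_tendsto (f_isBigO.trans_tendsto hg)
  refine ((exp_taylor.trans (f_isBigO.pow 2)).add hfg).congr_left fun x ↦ ?_
  ring

theorem exp_debyePhase_sub_one_sub_debyePhase_isBigO {z : ℝ} (hz : 0 < z) :
    (fun ν ↦ exp (debyePhase z (ν - 1) - debyePhase z ν) - (z / (2 * ν) + (z / 4) / ν ^ 2))
      =O[atTop] fun ν ↦ 1 / ν ^ 3 := by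
  have tendsto_zero : Tendsto (fun ν : ℝ ↦ 1 / (2 * ν)) atTop (𝓝 0) :=
    tendsto_const_nhds.div_atTop (tendsto_id.const_mul_atTop two_pos)
  have normalized : (fun ν ↦ exp (log (2 / z * ν) + (debyePhase z (ν - 1) - debyePhase z ν)) -
      (1 + 1 / (2 * ν))) =O[atTop] fun ν ↦ (1 / (2 * ν)) ^ 2 :=
    exp_sub_one_add_isBigO_sq tendsto_zero <|
      (debyePhase_sub_debyePhase_sub_one_isBigO hz).neg_left.congr_left fun ν ↦ by ring
  refine (((isBigO_refl (fun ν : ℝ ↦ 1 / ν) atTop).mul normalized).const_mul_left (z / 2)).congr'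
    ?_ .rfl |>.trans ?_
  · filter_upwards [eventually_gt_atTop 0] with ν hν
    rw [exp_add, exp_log (by positivity)]
    field_simp
    ring
  · exact (isBigO_const_mul_self (1 / 4) _ _).congr_left fun ν ↦ by ring

/-- With `A(ν) = (ν-1) log((ν-1)/z + √(((ν-1)/z)² - 1)) - ν log(ν/z + √((ν/z)² - 1))`
and `B(ν) = √(ν² - z²) - √((ν-1)² - z²)`, one has
`exp(A(ν) + B(ν)) = z/(2ν) + (z/4)/ν² + O(1/ν³)`. -/
theorem exp_A_plus_B_asymptotic (z : ℝ) (hz : 0 < z) :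
    ∃ C : ℝ, 0 < C ∧ ∃ ν₀ : ℝ, z + 1 < ν₀ ∧ ∀ ν : ℝ, ν₀ ≤ ν →
      |Real.exp (((ν - 1) * Real.log ((ν - 1) / z + Real.sqrt (((ν - 1) / z) ^ 2 - 1))
              - ν * Real.log (ν / z + Real.sqrt ((ν / z) ^ 2 - 1)))
            + (Real.sqrt (ν ^ 2 - z ^ 2) - Real.sqrt ((ν - 1) ^ 2 - z ^ 2)))
          - (z / (2 * ν) + (z / 4) / ν ^ 2)| ≤ C / ν ^ 3 := by
  obtain ⟨C, hC, hbound⟩ := (exp_debyePhase_sub_one_sub_debyePhase_isBigO hz).exists_pos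
  obtain ⟨ν₁, hν₁⟩ := eventually_atTop.1 hbound.bound
  refine ⟨C, hC, max ν₁ (z + 2), lt_max_of_lt_right (by linarith), fun ν hν ↦ ?_⟩
  have ν_pos : 0 < ν := by linarith [(le_max_right _ _).trans hν]
  have exponent_eq : debyePhase z (ν - 1) - debyePhase z ν =
      ((ν - 1) * log ((ν - 1) / z + √(((ν - 1) / z) ^ 2 - 1))
        - ν * log (ν / z + √((ν / z) ^ 2 - 1)))
      + (√(ν ^ 2 - z ^ 2) - √((ν - 1) ^ 2 - z ^ 2)) := by
    simp only [debyePhase, arcosh]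
    ring
  have bound_at := hν₁ ν ((le_max_left _ _).trans hν)
  rwa [exponent_eq, norm_eq_abs, norm_of_nonneg (by positivity), mul_one_div] at bound_at
end

section
/- Fix z > 0. For an integer n ≥ 1 set ν = n − 1/2 and let G_ν(w) = 1/2 + w·y'_{n−1}(w)/y_{n−1}(w) for w > 0, so G_ν(w) = w·Y'_ν(w)/Y_ν(w). There exist a constant C > 0 and an integer N such that for every integer n ≥ N, the derivative of G_ν with respect to its argument satisfies −(1/3)·z/ν − C/ν² ≤ G_ν'(z) ≤ (7/3)·z/ν + C/ν². -/
/-!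
The functions `uₙ(x) = -x ^ (n + 1) * yₙ(x)` are entire, take the value `(2n - 1)‼` at `0`, and
satisfy `uₙ₊₁' = x * uₙ`. Starting from `|u₀| = |cos| ≤ 1` and integrating from `0`, induction
gives `|uₙ| ≤ (2n - 1)‼ * exp (x ^ 2 / 2)`; one more integration gives `uₙ(x) ~ (2n - 1)‼` for
fixed `x`. This growth is what distinguishes `yₙ` from the decaying solution `jₙ` of the same
recurrence. The ratios `ρₙ = uₙ / uₙ₊₁` are therefore asymptotic to `1 / (2n + 1)`. Since
`z * yₙ₊₁' / yₙ₊₁ = z ^ 2 * ρₙ - (n + 2)` and `ρₙ₊₁' = z * ρₙ₊₁ * (ρₙ - ρₙ₊₁)`, it follows that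
`G_ν'(z) = z / ν + O(1 / ν ^ 2)`, and the constant `1` lies between `-1/3` and `7/3`.
-/

open Asymptotics Filter Set Topology
open scoped Nat

/-- The entire function `-x ^ (n + 1) * y_n(x)`, i.e. the spherical Bessel function `y_n` with its
pole at the origin removed. It is defined through the recurrence inherited from `y_n`, so that
its value at `0` is the correct one. -/
noncomputable def ysphNum : ℕ → ℝ → ℝ
  | 0, x => Real.cos x
  | 1, x => Real.cos x + x * Real.sin x
  | n + 2, x => (2 * n + 3) * ysphNum (n + 1) x - x ^ 2 * ysphNum n x

theorem ysphNum_add_two (n : ℕ) (x : ℝ) :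
    ysphNum (n + 2) x = (2 * n + 3) * ysphNum (n + 1) x - x ^ 2 * ysphNum n x := rfl

theorem ysph_eq_neg_ysphNum_div (n : ℕ) (x : ℝ) : ysph n x = -ysphNum n x / x ^ (n + 1) := by
  induction n using Nat.twoStepInduction with
  | zero => simp [ysph, ysphNum]
  | one =>
    rcases eq_or_ne x 0 with rfl | hx
    · simp [ysph]
    · simp only [ysph, ysphNum]
      field_simp
      ring
  | more n ih₀ ih₁ =>
    rcases eq_or_ne x 0 with rfl | hx
    · simp [ysph, ih₀]
    · rw [ysph, ysphNum, ih₀, ih₁]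
      field_simp
      ring

theorem even_ysphNum (n : ℕ) : (ysphNum n).Even := by
  intro x
  induction n using Nat.twoStepInduction with
  | zero => simp [ysphNum]
  | one => simp [ysphNum]
  | more n ih₀ ih₁ => rw [ysphNum_add_two, ysphNum_add_two, ih₀, ih₁, neg_sq]

theorem ysphNum_abs (n : ℕ) (x : ℝ) : ysphNum n |x| = ysphNum n x := by
  rcases abs_choice x with h | h <;> rw [h]
  exact even_ysphNum n x

theorem ysphNum_zero_right (n : ℕ) : ysphNum n 0 = (2 * n - 1)‼ := by
  induction n using Nat.twoStepInduction with
  | zero => simp [ysphNum]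
  | one => simp [ysphNum]
  | more n _ ih =>
    rw [ysphNum_add_two, ih, show 2 * (n + 2) - 1 = 2 * (n + 1) + 1 by lia,
      Nat.doubleFactorial_add_one]
    push_cast
    ring

theorem hasDerivAt_ysphNum_succ (n : ℕ) (x : ℝ) :
    HasDerivAt (ysphNum (n + 1)) (x * ysphNum n x) x := by
  match n with
  | 0 =>
    have h := (Real.hasDerivAt_cos x).add ((hasDerivAt_id' x).mul (Real.hasDerivAt_sin x))
    exact h.congr_deriv (by simp only [ysphNum]; ring)
  | 1 =>
    have h₀ : HasDerivAt (ysphNum 0) (-Real.sin x) x := Real.hasDerivAt_cos x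
    have h := ((hasDerivAt_ysphNum_succ 0 x).const_mul (2 * ((0 : ℕ) : ℝ) + 3)).sub
      ((hasDerivAt_pow 2 x).mul h₀)
    exact h.congr_deriv (by simp only [ysphNum]; push_cast; ring)
  | n + 2 =>
    have h := ((hasDerivAt_ysphNum_succ (n + 1) x).const_mul (2 * ((n + 1 : ℕ) : ℝ) + 3)).sub
      ((hasDerivAt_pow 2 x).mul (hasDerivAt_ysphNum_succ n x))
    exact h.congr_deriv (by rw [ysphNum_add_two n]; push_cast; ring)

theorem abs_ysphNum_succ_sub_le_of_abs_le {n : ℕ}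
    (hn : ∀ x, |ysphNum n x| ≤ (2 * n - 1)‼ * Real.exp (x ^ 2 / 2)) (x : ℝ) :
    |ysphNum (n + 1) x - (2 * n + 1)‼| ≤ (2 * n - 1)‼ * (Real.exp (x ^ 2 / 2) - 1) := by
  have hderiv (t : ℝ) :
      HasDerivAt (fun s ↦ ysphNum (n + 1) s - (2 * n + 1)‼) (t * ysphNum n t) t :=
    (hasDerivAt_ysphNum_succ n t).sub_const _
  have hmajorant (t : ℝ) : HasDerivAt (fun s ↦ (2 * n - 1)‼ * (Real.exp (s ^ 2 / 2) - 1))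
      ((2 * n - 1)‼ * (t * Real.exp (t ^ 2 / 2))) t :=
    ((((hasDerivAt_pow 2 t).div_const 2).exp.sub_const 1).const_mul _).congr_deriv
      (by push_cast; ring)
  have hzero : ysphNum (n + 1) 0 = (2 * n + 1)‼ := ysphNum_zero_right (n + 1)
  rw [← ysphNum_abs, ← sq_abs]
  refine image_norm_le_of_norm_deriv_right_le_deriv_boundary
    (fun t _ ↦ (hderiv t).continuousAt.continuousWithinAt)
    (fun t _ ↦ (hderiv t).hasDerivWithinAt) (by simp [hzero]) hmajorant (fun t ht ↦ ?_)
    (right_mem_Icc.2 (abs_nonneg x))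
  calc ‖t * ysphNum n t‖ = t * |ysphNum n t| := by
        rw [Real.norm_eq_abs, abs_mul, abs_of_nonneg ht.1]
    _ ≤ t * ((2 * n - 1)‼ * Real.exp (t ^ 2 / 2)) := mul_le_mul_of_nonneg_left (hn t) ht.1
    _ = (2 * n - 1)‼ * (t * Real.exp (t ^ 2 / 2)) := by ring

theorem abs_ysphNum_le (n : ℕ) (x : ℝ) :
    |ysphNum n x| ≤ (2 * n - 1)‼ * Real.exp (x ^ 2 / 2) := by
  induction n generalizing x with
  | zero =>
    calc |Real.cos x| ≤ 1 := Real.abs_cos_le_one x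
      _ ≤ Real.exp (x ^ 2 / 2) := Real.one_le_exp (by positivity)
      _ = (2 * 0 - 1)‼ * Real.exp (x ^ 2 / 2) := by simp
  | succ n ih =>
    have hexp : 1 ≤ Real.exp (x ^ 2 / 2) := Real.one_le_exp (by positivity)
    have hmono : ((2 * n - 1)‼ : ℝ) ≤ (2 * n + 1)‼ := by
      rw [Nat.doubleFactorial_add_one]
      exact_mod_cast Nat.le_mul_of_pos_left _ (Nat.succ_pos _)
    calc |ysphNum (n + 1) x|
        ≤ |ysphNum (n + 1) x - (2 * n + 1)‼| + |((2 * n + 1)‼ : ℝ)| := by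
          simpa using abs_add_le (ysphNum (n + 1) x - (2 * n + 1)‼) ((2 * n + 1)‼ : ℝ)
      _ ≤ (2 * n + 1)‼ * (Real.exp (x ^ 2 / 2) - 1) + (2 * n + 1)‼ := by
          rw [Nat.abs_cast]
          gcongr
          exact (abs_ysphNum_succ_sub_le_of_abs_le ih x).trans
            (mul_le_mul_of_nonneg_right hmono (sub_nonneg.2 hexp))
      _ = (2 * (n + 1) - 1)‼ * Real.exp (x ^ 2 / 2) := by
          rw [show 2 * (n + 1) - 1 = 2 * n + 1 by lia]
          ring

theorem abs_ysphNum_succ_sub_le (n : ℕ) (x : ℝ) :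
    |ysphNum (n + 1) x - (2 * n + 1)‼| ≤ (2 * n - 1)‼ * (Real.exp (x ^ 2 / 2) - 1) :=
  abs_ysphNum_succ_sub_le_of_abs_le (abs_ysphNum_le n) x

theorem doubleFactorial_two_mul_sub_one_div (n : ℕ) :
    ((2 * n - 1)‼ / (2 * n + 1)‼ : ℝ) = 1 / (2 * n + 1) := by
  have : (0 : ℝ) < (2 * n - 1)‼ := mod_cast Nat.doubleFactorial_pos _
  rw [Nat.doubleFactorial_add_one]
  push_cast
  field_simp

theorem tendsto_one_div_two_mul_add_one :
    Tendsto (fun n : ℕ ↦ 1 / (2 * n + 1 : ℝ)) atTop (𝓝 0) := by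
  simp only [one_div]
  exact (tendsto_atTop_add_const_right _ 1
    (tendsto_natCast_atTop_atTop.const_mul_atTop two_pos)).inv_tendsto_atTop

theorem ysphNum_isEquivalent (x : ℝ) :
    (fun n ↦ ysphNum n x) ~[atTop] fun n ↦ ((2 * n - 1)‼ : ℝ) := by
  have hne (m : ℕ) : ((m‼ : ℕ) : ℝ) ≠ 0 := mod_cast (Nat.doubleFactorial_pos m).ne'
  have hsmall : (fun n : ℕ ↦ ((2 * n - 1)‼ : ℝ)) =o[atTop] fun n ↦ ((2 * n + 1)‼ : ℝ) := by
    rw [isLittleO_iff_tendsto (fun n h ↦ absurd h (hne _))]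
    simpa only [doubleFactorial_two_mul_sub_one_div] using tendsto_one_div_two_mul_add_one
  have hbig : (fun n ↦ ysphNum (n + 1) x - (2 * n + 1)‼) =O[atTop]
      fun n : ℕ ↦ ((2 * n - 1)‼ : ℝ) :=
    IsBigO.of_bound (Real.exp (x ^ 2 / 2) - 1) <| .of_forall fun n ↦ by
      simpa [mul_comm] using abs_ysphNum_succ_sub_le n x
  rw [IsEquivalent, ← map_add_atTop_eq_nat 1, isLittleO_map]
  exact hbig.trans_isLittleO hsmall

theorem eventually_ysphNum_pos (x : ℝ) : ∀ᶠ n in atTop, 0 < ysphNum n x :=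
  (ysphNum_isEquivalent x).eventually_pos (.of_forall fun _ ↦ mod_cast Nat.doubleFactorial_pos _)

/-- The ratio of consecutive functions `ysphNum`, through which the logarithmic derivative of
`y_{n+1}` is expressed; for `x ≠ 0` it equals `y_n(x) / (x * y_{n+1}(x))`. -/
noncomputable def ysphRatio (n : ℕ) (x : ℝ) : ℝ :=
  ysphNum n x / ysphNum (n + 1) x

theorem ysphRatio_isEquivalent (x : ℝ) :
    (fun n ↦ ysphRatio n x) ~[atTop] fun n ↦ 1 / (2 * n + 1 : ℝ) := by
  have h := (ysphNum_isEquivalent x).div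
    ((ysphNum_isEquivalent x).comp_tendsto (tendsto_add_atTop_nat 1))
  exact h.congr_right (.of_forall doubleFactorial_two_mul_sub_one_div)

theorem ysphRatio_succ_mul {n : ℕ} {x : ℝ} (h₁ : ysphNum (n + 1) x ≠ 0)
    (h₂ : ysphNum (n + 2) x ≠ 0) :
    ysphRatio (n + 1) x * (2 * n + 3 - x ^ 2 * ysphRatio n x) = 1 := by
  rw [ysphRatio, ysphRatio]
  field_simp
  rw [ysphNum_add_two]
  ring

theorem hasDerivAt_ysphRatio_succ {n : ℕ} {x : ℝ} (h₁ : ysphNum (n + 1) x ≠ 0)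
    (h₂ : ysphNum (n + 2) x ≠ 0) :
    HasDerivAt (ysphRatio (n + 1))
      (x * ysphRatio (n + 1) x * (ysphRatio n x - ysphRatio (n + 1) x)) x := by
  refine ((hasDerivAt_ysphNum_succ n x).div (hasDerivAt_ysphNum_succ (n + 1) x) h₂).congr_deriv ?_
  rw [ysphRatio, ysphRatio]
  field_simp

theorem mul_logDeriv_ysph_succ {n : ℕ} {x : ℝ} (hx : x ≠ 0) (h : ysphNum (n + 1) x ≠ 0) :
    x * logDeriv (ysph (n + 1)) x = x ^ 2 * ysphRatio n x - (n + 2) := by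
  have hy : ysph (n + 1) = fun w ↦ -ysphNum (n + 1) w / w ^ (n + 2) :=
    funext (ysph_eq_neg_ysphNum_div (n + 1))
  have hderiv := hasDerivAt_ysphNum_succ n x
  rw [hy, logDeriv_div (g := (· ^ (n + 2))) x (by simpa using h) (pow_ne_zero _ hx)
    hderiv.fun_neg.differentiableAt (differentiableAt_pow _), logDeriv_pow,
    logDeriv_apply, hderiv.fun_neg.deriv, ysphRatio]
  push_cast
  field_simp

theorem deriv_half_add_mul_logDeriv_ysph {n : ℕ} {z : ℝ} (hz : z ≠ 0)
    (h₁ : ysphNum (n + 1) z ≠ 0) (h₂ : ysphNum (n + 2) z ≠ 0) :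
    deriv (fun w ↦ 1 / 2 + w * deriv (ysph (n + 2)) w / ysph (n + 2) w) z =
      2 * z * ysphRatio (n + 1) z +
        z ^ 3 * ysphRatio (n + 1) z * (ysphRatio n z - ysphRatio (n + 1) z) := by
  have hlocal : (fun w ↦ 1 / 2 + w * deriv (ysph (n + 2)) w / ysph (n + 2) w) =ᶠ[𝓝 z]
      fun w ↦ 1 / 2 + (w ^ 2 * ysphRatio (n + 1) w - ((n + 1 : ℕ) + 2)) := by
    filter_upwards [eventually_ne_nhds hz,
      (hasDerivAt_ysphNum_succ (n + 1) z).continuousAt.eventually_ne h₂] with w hw hw₂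
    rw [← mul_logDeriv_ysph_succ hw hw₂, logDeriv_apply, mul_div_assoc]
  have hderiv := (((hasDerivAt_pow 2 z).mul (hasDerivAt_ysphRatio_succ h₁ h₂)).sub_const
    (((n + 1 : ℕ) : ℝ) + 2)).const_add (1 / 2)
  rw [hlocal.deriv_eq]
  refine hderiv.deriv.trans ?_
  push_cast
  ring

theorem deriv_half_add_mul_logDeriv_ysph_sub {n : ℕ} {z : ℝ} (hz : z ≠ 0)
    (h₁ : ysphNum (n + 1) z ≠ 0) (h₂ : ysphNum (n + 2) z ≠ 0) :
    deriv (fun w ↦ 1 / 2 + w * deriv (ysph (n + 2)) w / ysph (n + 2) w) z - z / (n + 5 / 2) =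
      ysphRatio (n + 1) z * (z * (n + 5 / 2 : ℝ)⁻¹ * (2 + z ^ 2 * ysphRatio n z) +
        z ^ 3 * (ysphRatio n z - ysphRatio (n + 1) z)) := by
  rw [deriv_half_add_mul_logDeriv_ysph hz h₁ h₂]
  field_simp
  linear_combination 2 * ysphRatio_succ_mul h₁ h₂

theorem ysphRatio_isBigO (a x : ℝ) :
    (fun n ↦ ysphRatio n x) =O[atTop] fun n ↦ (n + a)⁻¹ := by
  have hlin : (fun n : ℕ ↦ n + a) =O[atTop] fun n ↦ (2 * n + 1 : ℝ) := by
    refine IsBigO.of_bound (1 + |a|) (.of_forall fun n ↦ ?_)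
    have hn : (0 : ℝ) ≤ n := n.cast_nonneg
    rw [Real.norm_of_nonneg (by positivity : (0 : ℝ) ≤ 2 * n + 1), Real.norm_eq_abs]
    calc |n + a| ≤ n + |a| := by simpa using abs_add_le (n : ℝ) a
      _ ≤ (1 + |a|) * (2 * n + 1) := by nlinarith [mul_nonneg (abs_nonneg a) hn]
  have hne : ∀ᶠ n : ℕ in atTop, n + a ≠ 0 :=
    (tendsto_atTop_add_const_right _ a tendsto_natCast_atTop_atTop).eventually_ne_atTop 0
  have hinv := hlin.inv_rev (hne.mono fun n hn h ↦ absurd h hn)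
  exact (ysphRatio_isEquivalent x).isBigO.trans (by simpa only [one_div] using hinv)

theorem deriv_logderiv_bessel_Y_asymptotic_general {z : ℝ} (hz : z ≠ 0) :
    (fun n : ℕ ↦ deriv (fun w ↦ 1 / 2 + w * deriv (ysph (n - 1)) w / ysph (n - 1) w) z -
      z / (n - 1 / 2)) =O[atTop] fun n ↦ 1 / ((n : ℝ) - 1 / 2) ^ 2 := by
  have hν (n : ℕ) : ((n + 3 : ℕ) : ℝ) - 1 / 2 = n + 5 / 2 := by push_cast; ring
  have hρ : (fun n ↦ ysphRatio n z) =O[atTop] fun n ↦ (n + 5 / 2 : ℝ)⁻¹ := ysphRatio_isBigO _ z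
  have hρ' : (fun n ↦ ysphRatio (n + 1) z) =O[atTop] fun n ↦ (n + 5 / 2 : ℝ)⁻¹ :=
    ((ysphRatio_isBigO (3 / 2) z).comp_tendsto (tendsto_add_atTop_nat 1)).congr_right fun n ↦ by
      simp only [Function.comp_apply]; push_cast; ring
  have hρ_one : (fun n ↦ 2 + z ^ 2 * ysphRatio n z) =O[atTop] fun _ ↦ (1 : ℝ) := by
    have hlim := (ysphRatio_isEquivalent z).symm.tendsto_nhds tendsto_one_div_two_mul_add_one
    exact ((hlim.const_mul (z ^ 2)).const_add 2).isBigO_one ℝ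
  have herror := hρ'.mul ((((isBigO_refl _ _).const_mul_left z).mul hρ_one).add
    (by simpa using (hρ.sub hρ').const_mul_left (z ^ 3)))
  rw [← map_add_atTop_eq_nat 3, isBigO_map]
  refine herror.congr' ?_ (.of_forall fun n ↦ ?_)
  · filter_upwards [(tendsto_add_atTop_nat 1).eventually (eventually_ysphNum_pos z),
      (tendsto_add_atTop_nat 2).eventually (eventually_ysphNum_pos z)] with n h₁ h₂
    rw [← deriv_half_add_mul_logDeriv_ysph_sub hz h₁.ne' h₂.ne', ← hν]
    rfl
  · simp only [Function.comp_apply, hν]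
    field_simp

/-- Asymptotic two-sided bound on the derivative of
`G_ν(w) = 1/2 + w y'_{n-1}(w)/y_{n-1}(w) = w Y'_ν(w)/Y_ν(w)`, `ν = n - 1/2`. -/
theorem deriv_logderiv_bessel_Y_asymptotic (z : ℝ) (hz : 0 < z) :
    ∃ C : ℝ, 0 < C ∧ ∃ N : ℕ, 1 ≤ N ∧ ∀ n : ℕ, N ≤ n →
      -(1/3) * z / ((n : ℝ) - 1/2) - C / ((n : ℝ) - 1/2) ^ 2
        ≤ deriv (fun w => 1/2 + w * deriv (ysph (n - 1)) w / ysph (n - 1) w) z ∧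
      deriv (fun w => 1/2 + w * deriv (ysph (n - 1)) w / ysph (n - 1) w) z
        ≤ (7/3) * z / ((n : ℝ) - 1/2) + C / ((n : ℝ) - 1/2) ^ 2 := by
  obtain ⟨C, hC, hbound⟩ := (deriv_logderiv_bessel_Y_asymptotic_general hz.ne').exists_pos
  obtain ⟨N, hN⟩ := eventually_atTop.1 hbound.bound
  refine ⟨C, hC, max N 1, le_max_right _ _, fun n hn ↦ ?_⟩
  have hn_one : (1 : ℝ) ≤ n := mod_cast (le_max_right _ _).trans hn
  have hmain : 0 ≤ z / ((n : ℝ) - 1 / 2) := div_nonneg hz.le (by linarith)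
  have herror := hN n ((le_max_left _ _).trans hn)
  rw [Real.norm_eq_abs, Real.norm_of_nonneg (by positivity), mul_one_div, abs_le] at herror
  rw [mul_div_assoc, mul_div_assoc]
  constructor <;> linarith [herror.1, herror.2]
end
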